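/- arXiv:2506.04442 — 2 statements merged into one kernel-verified Lean document; each statement's English description precedes it below -/
import Mathlib

section
/- Let γ : [0,s] → ℝ³ be a 1-constrained arc (arclength-parametrized, C¹ and piecewise C², with ‖γ''(t)‖ ≤ 1 wherever defined) whose image is contained in a closed ball B of radius 1 in ℝ³. Then either the entire image γ([0,s]) is contained in the boundary sphere ∂B, or the open part of the arc avoids the boundary entirely: γ((0,s)) ∩ ∂B = ∅. In particular, a 1-constrained arc inside a radius-1 ball cannot touch the boundary sphere at a single isolated interior point. -/
open Set Metric

noncomputable section

/-- ℝ³ as a Euclidean space. -/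
abbrev E3 : Type := EuclideanSpace ℝ (Fin 3)

/-- `γ : [0,s] → ℝ³` is a κ-constrained curve: arclength-parametrized
(unit speed), `C¹` and piecewise `C²`, with `‖γ''(t)‖ ≤ κ` wherever the second
derivative is defined (i.e. away from a finite set of break points). -/
structure IsKConstrained (κ s : ℝ) (γ : ℝ → E3) : Prop where
  s_pos : 0 < s
  contDiff : ContDiffOn ℝ 1 γ (Icc 0 s)
  unitSpeed : ∀ t ∈ Icc 0 s, ‖derivWithin γ (Icc 0 s) t‖ = 1
  piecewiseC2 : ∃ F : Finset ℝ, ∀ t ∈ Icc 0 s, t ∉ F →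
    ∃ d : E3, HasDerivWithinAt (fun u => derivWithin γ (Icc 0 s) u) d (Icc 0 s) t ∧ ‖d‖ ≤ κ

/-- A 1-constrained arc: an embedded κ-constrained curve with κ = 1 and
distinct endpoints. -/
def IsOneConstrainedArc (s : ℝ) (γ : ℝ → E3) : Prop :=
  IsKConstrained 1 s γ ∧ InjOn γ (Icc 0 s) ∧ γ 0 ≠ γ s

theorem aux_mono (F : Finset ℝ) : ∀ (g : ℝ → ℝ) (a b : ℝ), a ≤ b → ContinuousOn g (Icc a b) →
    (∀ t ∈ Ioo a b, t ∉ F → ∃ d, 0 ≤ d ∧ HasDerivAt g d t) → g a ≤ g b := by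
  induction F using Finset.induction_on with
  | empty =>
    intro g a b hab hc hd
    have hm : MonotoneOn g (Icc a b) := by
      apply monotoneOn_of_deriv_nonneg (convex_Icc a b) hc
      · rw [interior_Icc]
        intro t ht
        obtain ⟨d, _, h⟩ := hd t ht (by simp)
        exact h.differentiableAt.differentiableWithinAt
      · rw [interior_Icc]
        intro t ht
        obtain ⟨d, h0, h⟩ := hd t ht (by simp)
        rw [h.deriv]
        exact h0
    exact hm (left_mem_Icc.2 hab) (right_mem_Icc.2 hab) hab
  | insert x F hx ih =>
    intro g a b hab hc hd
    by_cases hxm : x ∈ Ioo a b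
    · have h1 := ih g a x hxm.1.le (hc.mono (Icc_subset_Icc_right hxm.2.le))
        (fun t ht htF => hd t ⟨ht.1, ht.2.trans hxm.2⟩ (by
          simp only [Finset.mem_insert, not_or]; exact ⟨ht.2.ne, htF⟩))
      have h2 := ih g x b hxm.2.le (hc.mono (Icc_subset_Icc_left hxm.1.le))
        (fun t ht htF => hd t ⟨hxm.1.trans ht.1, ht.2⟩ (by
          simp only [Finset.mem_insert, not_or]; exact ⟨ht.1.ne', htF⟩))
      exact h1.trans h2
    · refine ih g a b hab hc (fun t ht htF => hd t ht ?_)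
      simp only [Finset.mem_insert, not_or]
      exact ⟨fun h => hxm (h ▸ ht), htF⟩

/-- A 1-constrained arc contained in a closed ball of radius 1
either lies entirely on the boundary sphere, or its interior part avoids the
boundary sphere entirely; in particular it cannot touch the boundary at a
single isolated interior point. -/
theorem oneConstrained_arc_in_unit_ball_boundary_dichotomy
    (s : ℝ) (γ : ℝ → E3) (c : E3)
    (harc : IsOneConstrainedArc s γ)
    (hball : γ '' Icc 0 s ⊆ closedBall c 1) :
    γ '' Icc 0 s ⊆ sphere c 1 ∨ γ '' Ioo 0 s ∩ sphere c 1 = ∅ := by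
  obtain ⟨⟨hs, hC, hu, F, hF⟩, -, -⟩ := harc
  set I : Set ℝ := Icc 0 s with hI
  set v : ℝ → E3 := fun u => derivWithin γ I u with hv
  set p : ℝ → E3 := fun u => γ u - c with hp
  have hle : ∀ t ∈ I, ‖p t‖ ≤ 1 := by
    intro t ht
    have := hball (mem_image_of_mem γ ht)
    rwa [mem_closedBall, dist_eq_norm] at this
  have hvc : ContinuousOn v I :=
    hC.continuousOn_derivWithin (uniqueDiffOn_Icc hs) le_rfl
  have hpc : ContinuousOn p I := hC.continuousOn.sub continuousOn_const
  have hnhds : ∀ t ∈ Ioo 0 s, I ∈ nhds t := fun t ht => Icc_mem_nhds ht.1 ht.2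
  have hpd : ∀ t ∈ Ioo 0 s, HasDerivAt p (v t) t := by
    intro t ht
    have h1 := (hC.differentiableOn one_ne_zero t (Ioo_subset_Icc_self ht)).hasDerivWithinAt
    exact (h1.hasDerivAt (hnhds t ht)).sub_const c
  set f : ℝ → ℝ := fun u => inner ℝ (p u) (p u) with hf
  set g : ℝ → ℝ := fun u => inner ℝ (p u) (v u) with hg
  have hfc : ContinuousOn f I := hpc.inner hpc
  have hgc : ContinuousOn g I := hpc.inner hvc
  have hfd : ∀ t ∈ Ioo 0 s, HasDerivAt f (2 * g t) t := by
    intro t ht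
    have := (hpd t ht).inner ℝ (hpd t ht)
    have e : 2 * g t = inner ℝ (p t) (v t) + inner ℝ (v t) (p t) := by
      change 2 * inner ℝ (p t) (v t) = inner ℝ (p t) (v t) + inner ℝ (v t) (p t)
      rw [real_inner_comm (p t) (v t)]
      ring
    rw [e]
    exact this
  have hfn : ∀ t, f t = ‖p t‖ ^ 2 := fun t => real_inner_self_eq_norm_sq _
  have hgm : ∀ a ∈ I, ∀ b ∈ I, a ≤ b → g a ≤ g b := by
    intro a ha b hb hab
    refine aux_mono F g a b hab (hgc.mono (Icc_subset_Icc ha.1 hb.2)) ?_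
    intro t ht htF
    have ht' : t ∈ Ioo 0 s := ⟨ha.1.trans_lt ht.1, ht.2.trans_le hb.2⟩
    have htI : t ∈ I := Ioo_subset_Icc_self ht'
    obtain ⟨d, hd, hd1⟩ := hF t htI htF
    refine ⟨_, ?_, (hpd t ht').inner ℝ (hd.hasDerivAt (hnhds t ht'))⟩
    have h1 : inner ℝ (v t) (v t) = (1 : ℝ) := by
      rw [real_inner_self_eq_norm_sq, hu t htI]; norm_num
    have h2 := abs_real_inner_le_norm (p t) d
    have h3 : ‖p t‖ * ‖d‖ ≤ 1 := mul_le_one₀ (hle t htI) (norm_nonneg _) hd1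
    have h4 := neg_abs_le (inner ℝ (p t) d)
    have h1' : inner ℝ (v t) (derivWithin γ I t) = (1 : ℝ) := h1
    linarith
  by_cases hne : γ '' Ioo 0 s ∩ sphere c 1 = ∅
  · exact Or.inr hne
  left
  obtain ⟨_, ⟨t0, ht0, rfl⟩, hsp⟩ := nonempty_iff_ne_empty.2 hne
  have ht0I : t0 ∈ I := Ioo_subset_Icc_self ht0
  have hp0 : ‖p t0‖ = 1 := by rwa [mem_sphere, dist_eq_norm] at hsp
  have hf0 : f t0 = 1 := by rw [hfn, hp0]; norm_num
  have hg0 : g t0 = 0 := by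
    have hmax : IsLocalMax f t0 := by
      filter_upwards [hnhds t0 ht0] with t ht
      rw [hf0, hfn]
      exact pow_le_one₀ (norm_nonneg _) (hle t ht)
    have := hmax.hasDerivAt_eq_zero (hfd t0 ht0)
    linarith
  have key : ∀ t ∈ I, 1 ≤ f t := by
    intro t ht
    rcases le_total t0 t with h | h
    · have := aux_mono ∅ f t0 t h (hfc.mono (Icc_subset_Icc ht0I.1 ht.2)) (by
        intro u hu' _
        have hu2 : u ∈ Ioo 0 s := ⟨ht0.1.trans hu'.1, hu'.2.trans_le ht.2⟩
        refine ⟨_, ?_, hfd u hu2⟩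
        have := hgm t0 ht0I u (Ioo_subset_Icc_self hu2) hu'.1.le
        linarith)
      linarith
    · have := aux_mono ∅ (fun u => - f u) t t0 h
        (hfc.mono (Icc_subset_Icc ht.1 ht0I.2)).neg (by
        intro u hu' _
        have hu2 : u ∈ Ioo 0 s := ⟨ht.1.trans_lt hu'.1, hu'.2.trans ht0.2⟩
        refine ⟨_, ?_, (hfd u hu2).neg⟩
        have := hgm u (Ioo_subset_Icc_self hu2) t0 ht0I hu'.2.le
        linarith)
      linarith
  rintro _ ⟨t, ht, rfl⟩
  rw [mem_sphere, dist_eq_norm]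
  have h1 := key t ht
  rw [hfn] at h1
  have h2 : ‖p t‖ = 1 := by
    apply le_antisymm (hle t ht)
    nlinarith [norm_nonneg (p t)]
  exact h2

end
end

section
/- For points x, y ∈ ℝ³ with 0 < ‖x − y‖ < 2, the space Σ(x,y) of 1-constrained arcs from x to y, equipped with the C¹ metric, has exactly two connected components, and one of these components consists exclusively of embedded arcs. -/
open Set Metric

noncomputable section

/-- `γ : [0,s] → ℝ³` is a 1-constrained curve: arclength-parametrized
(unit speed), `C¹` and piecewise `C²`, with `‖γ''(t)‖ ≤ 1` wherever the second
derivative is defined (i.e. away from a finite set of break points). -/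
structure IsOneConstrained (s : ℝ) (γ : ℝ → E3) : Prop where
  s_pos : 0 < s
  contDiff : ContDiffOn ℝ 1 γ (Icc 0 s)
  unitSpeed : ∀ t ∈ Icc 0 s, ‖derivWithin γ (Icc 0 s) t‖ = 1
  piecewiseC2 : ∃ F : Finset ℝ, ∀ t ∈ Icc 0 s, t ∉ F →
    ∃ d : E3, HasDerivWithinAt (fun u => derivWithin γ (Icc 0 s) u) d (Icc 0 s) t ∧ ‖d‖ ≤ 1

/-- `Σ(x,y)`: the space of 1-constrained arcs from `x` to `y`, recorded as a pair
(arclength `s`, curve `γ`). -/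
def SigmaSpace (x y : E3) : Type :=
  { p : ℝ × (ℝ → E3) // IsOneConstrained p.1 p.2 ∧ p.2 0 = x ∧ p.2 p.1 = y }

/-- The `C¹` topology on `Σ(x,y)`: the topology induced by recording the arclength
together with the curve and its derivative (reparametrized over `[0,1]`), the
function spaces carrying the topology of uniform (`C⁰`) convergence; this is the
topology of `C¹` convergence of arcs. -/
instance sigmaSpaceTopology (x y : E3) : TopologicalSpace (SigmaSpace x y) :=
  TopologicalSpace.induced
    (fun q : SigmaSpace x y =>
      ((q.1.1,
        UniformFun.ofFun (fun t : unitInterval => q.1.2 ((t : ℝ) * q.1.1)),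
        UniformFun.ofFun (fun t : unitInterval =>
          derivWithin q.1.2 (Icc 0 q.1.1) ((t : ℝ) * q.1.1))) :
        ℝ × UniformFun unitInterval E3 × UniformFun unitInterval E3))
    inferInstance


lemma lip_aux (u : ℝ → E3) (hu : Continuous u) (F : Finset ℝ) : ∀ a b : ℝ, a ≤ b →
    (∀ t ∈ Ioo a b, t ∉ F → ∃ d : E3, HasDerivAt u d t ∧ ‖d‖ ≤ 1) → ‖u b - u a‖ ≤ b - a := by
  induction F using Finset.induction_on with
  | empty =>
    intro a b hab h
    rcases hab.eq_or_lt with rfl | hab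
    · simp
    have h' : ∀ t : ℝ, ∃ d : E3, t ∈ Ioo a b → HasDerivAt u d t ∧ ‖d‖ ≤ 1 := by
      intro t
      by_cases ht : t ∈ Ioo a b
      · obtain ⟨d, hd⟩ := h t ht (by simp)
        exact ⟨d, fun _ => hd⟩
      · exact ⟨0, fun h => absurd h ht⟩
    choose d hd using h'
    set z := u b - u a with hz
    obtain ⟨c, hc, hc'⟩ := exists_hasDerivAt_eq_slope (fun t => inner ℝ z (u t))
      (fun t => inner ℝ z (d t)) hab (by fun_prop) (fun t ht => by
        have := (hasDerivAt_const t z).inner ℝ (hd t ht).1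
        simpa using this)
    have h1 : inner ℝ z (u b) - inner ℝ z (u a) = ‖z‖ ^ 2 := by
      rw [← inner_sub_right, ← hz, real_inner_self_eq_norm_sq]
    rw [h1, eq_div_iff (by linarith)] at hc'
    have h2 : inner ℝ z (d c) ≤ ‖z‖ := by
      calc inner ℝ z (d c) ≤ ‖z‖ * ‖d c‖ := real_inner_le_norm _ _
        _ ≤ ‖z‖ * 1 := by gcongr; exact (hd c hc).2
        _ = ‖z‖ := mul_one _
    by_contra! hlt
    nlinarith [norm_nonneg z]
  | insert c F hc ih =>
    intro a b hab h
    by_cases hcm : c ∈ Ioo a b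
    · have e1 := ih a c hcm.1.le (fun t ht htF => h t ⟨ht.1, ht.2.trans hcm.2⟩ (by
        simp only [Finset.mem_insert, not_or]; exact ⟨ht.2.ne, htF⟩))
      have e2 := ih c b hcm.2.le (fun t ht htF => h t ⟨hcm.1.trans ht.1, ht.2⟩ (by
        simp only [Finset.mem_insert, not_or]; exact ⟨ht.1.ne', htF⟩))
      calc ‖u b - u a‖ = ‖(u b - u c) + (u c - u a)‖ := by congr 1; abel
        _ ≤ _ := norm_add_le _ _
        _ ≤ b - a := by linarith
    · exact ih a b hab (fun t ht htF => h t ht (by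
        simp only [Finset.mem_insert, not_or]
        exact ⟨fun h => hcm (h ▸ ht), htF⟩))

lemma angle_le_chord (a b : E3) (ha : ‖a‖ = 1) (hb : ‖b‖ = 1) :
    InnerProductGeometry.angle a b ≤ ‖a - b‖ + ‖a - b‖ ^ 3 := by
  set θ := InnerProductGeometry.angle a b with hθ
  have h0 : 0 ≤ θ := InnerProductGeometry.angle_nonneg _ _
  have hpi : θ ≤ Real.pi := InnerProductGeometry.angle_le_pi _ _
  have hcos : Real.cos θ = inner ℝ a b := by
    rw [hθ, InnerProductGeometry.cos_angle, ha, hb]; simp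
  have hs : 0 ≤ Real.sin (θ / 2) := Real.sin_nonneg_of_nonneg_of_le_pi (by linarith) (by linarith)
  have hc : ‖a - b‖ = 2 * Real.sin (θ / 2) := by
    have h1 : ‖a - b‖ ^ 2 = (2 * Real.sin (θ / 2)) ^ 2 := by
      rw [norm_sub_sq_real, ha, hb, ← hcos]
      have h3 := Real.cos_sq (θ / 2)
      have h4 := Real.sin_sq_add_cos_sq (θ / 2)
      rw [show 2 * (θ / 2) = θ by ring] at h3
      nlinarith
    exact (pow_left_inj₀ (norm_nonneg _) (by positivity) two_ne_zero).1 h1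
  rcases h0.eq_or_lt with h | h
  · rw [← h]; positivity
  have h5 := Real.sin_gt_sub_cube (show 0 < θ / 2 by linarith)
  have h6 := Real.mul_le_sin (show 0 ≤ θ / 2 by linarith) (by linarith)
  have h7 : θ ≤ 2 * ‖a - b‖ := by
    rw [hc]
    have : 2 / Real.pi ≥ 1 / 2 := by
      rw [ge_iff_le, div_le_div_iff₀ (by norm_num) Real.pi_pos]; linarith [Real.pi_le_four]
    nlinarith
  have h8 : θ ^ 3 ≤ (2 * ‖a - b‖) ^ 3 := by gcongr
  nlinarith [pow_nonneg (norm_nonneg (a-b)) 3]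

lemma angle_le_dist (u : ℝ → E3) (hu : ∀ t, ‖u t‖ = 1) (hl : ∀ a b, ‖u a - u b‖ ≤ |a - b|)
    (a b : ℝ) (hab : a ≤ b) : InnerProductGeometry.angle (u a) (u b) ≤ b - a := by
  have key : ∀ h : ℝ, 0 ≤ h → ∀ k : ℕ,
      InnerProductGeometry.angle (u a) (u (a + k * h)) ≤ k * (h + h ^ 3) := by
    intro h hh k
    induction k with
    | zero =>
      have : u a ≠ 0 := by rw [← norm_ne_zero_iff, hu]; norm_num
      simp [InnerProductGeometry.angle_self this]
    | succ k ih =>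
      have h1 := InnerProductGeometry.angle_le_angle_add_angle (u a) (u (a + k * h))
        (u (a + (k + 1 : ℕ) * h))
      have h2 := angle_le_chord (u (a + k * h)) (u (a + (k + 1 : ℕ) * h)) (hu _) (hu _)
      have h3 : ‖u (a + k * h) - u (a + (k + 1 : ℕ) * h)‖ ≤ h := by
        refine (hl _ _).trans ?_
        push_cast
        rw [show a + k * h - (a + (k + 1) * h) = -h by ring, abs_neg, abs_of_nonneg hh]
      have h4 : ‖u (a + k * h) - u (a + (k + 1 : ℕ) * h)‖ ^ 3 ≤ h ^ 3 := by gcongr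
      push_cast at *
      linarith
  have hlim : Filter.Tendsto (fun n : ℕ => (b - a) + (b - a) ^ 3 * (1 / ((n : ℝ) + 1)))
      Filter.atTop (nhds ((b - a) + (b - a) ^ 3 * 0)) :=
    (tendsto_one_div_add_atTop_nhds_zero_nat.const_mul _).const_add _
  rw [mul_zero, add_zero] at hlim
  refine ge_of_tendsto' hlim fun n => ?_
  have hn : (0 : ℝ) < (n : ℝ) + 1 := by positivity
  have h0 : 0 ≤ b - a := by linarith
  have := key ((b - a) / (n + 1)) (by positivity) (n + 1)
  push_cast at this
  rw [show a + (n + 1 : ℝ) * ((b - a) / (n + 1)) = b by field_simp; ring] at this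
  refine this.trans ?_
  have e : (n + 1 : ℝ) * ((b - a) / (n + 1) + ((b - a) / (n + 1)) ^ 3)
      = (b - a) + (b - a) ^ 3 * (1 / ((n : ℝ) + 1)) * (1 / ((n : ℝ) + 1)) := by
    field_simp
  rw [e]
  have h1 : 1 / ((n : ℝ) + 1) ≤ 1 := by
    rw [div_le_one hn]; have : (0:ℝ) ≤ n := by positivity
    linarith
  have h2 : 0 ≤ (b - a) ^ 3 * (1 / ((n : ℝ) + 1)) := by positivity
  nlinarith

lemma cos_le_inner (u : ℝ → E3) (hu : ∀ t, ‖u t‖ = 1) (hl : ∀ a b, ‖u a - u b‖ ≤ |a - b|)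
    (a b : ℝ) (hab : |a - b| ≤ Real.pi) : Real.cos (a - b) ≤ inner ℝ (u a) (u b) := by
  have main : ∀ a b : ℝ, a ≤ b → b - a ≤ Real.pi → Real.cos (a - b) ≤ inner ℝ (u a) (u b) := by
    intro a b h h'
    have h1 := angle_le_dist u hu hl a b h
    have h2 : Real.cos (InnerProductGeometry.angle (u a) (u b)) = inner ℝ (u a) (u b) := by
      rw [InnerProductGeometry.cos_angle, hu, hu]; simp
    rw [← h2, ← Real.cos_neg, neg_sub]
    exact Real.cos_le_cos_of_nonneg_of_le_pi (InnerProductGeometry.angle_nonneg _ _) h' h1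
  rcases le_total a b with h | h
  · exact main a b h ((neg_sub a b ▸ neg_le_abs (a - b)).trans hab)
  · rw [real_inner_comm, ← Real.cos_neg, neg_sub]
    exact main b a h ((le_abs_self _).trans hab)

/-- data of the tangent indicatrix -/
structure Tan (s : ℝ) (u : ℝ → E3) : Prop where
  pos : 0 < s
  cont : Continuous u
  unit : ∀ t, ‖u t‖ = 1
  lip : ∀ a b, ‖u a - u b‖ ≤ |a - b|
  pw : ∃ F : Finset ℝ, ∀ t ∈ Ioo 0 s, t ∉ F → ∃ d : E3, HasDerivAt u d t ∧ ‖d‖ ≤ 1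

lemma inner_integral_ge {s : ℝ} {u : ℝ → E3} (h : Tan s u) (a b c : ℝ) (hac : a ≤ c) (hcb : c ≤ b)
    (hab : b - a ≤ Real.pi) :
    Real.sin (c - a) + Real.sin (b - c) ≤ inner ℝ (∫ t in a..b, u t) (u c) := by
  have h1 : inner ℝ (∫ t in a..b, u t) (u c) = ∫ t in a..b, inner ℝ (u t) (u c) := by
    rw [real_inner_comm]
    have := (innerSL ℝ (u c)).intervalIntegral_comp_comm (μ := MeasureTheory.volume) (h.cont.intervalIntegrable a b)
    simp only [innerSL_apply_apply] at this
    rw [← this]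
    exact intervalIntegral.integral_congr (fun t _ => real_inner_comm _ _)
  have h2 : ∫ t in a..b, Real.cos (t - c) = Real.sin (c - a) + Real.sin (b - c) := by
    rw [intervalIntegral.integral_comp_sub_right (fun t => Real.cos t), integral_cos,
      ← neg_sub a c, Real.sin_neg]; ring
  rw [h1, ← h2]
  have hc := h.cont
  refine intervalIntegral.integral_mono_on (hac.trans hcb)
    (Continuous.intervalIntegrable (by fun_prop) _ _)
    (Continuous.intervalIntegrable (by fun_prop) _ _) (fun t ht => ?_)
  refine cos_le_inner u h.unit h.lip t c ?_
  rw [abs_le]; constructor <;> linarith [ht.1, ht.2]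

lemma exists_tan {s : ℝ} {γ : ℝ → E3} (h : IsOneConstrained s γ) : ∃ u, Tan s u ∧
    (∀ t ∈ Icc 0 s, derivWithin γ (Icc 0 s) t = u t) ∧
    (∀ t ∈ Icc 0 s, γ t = γ 0 + ∫ r in (0:ℝ)..t, u r) := by
  have hs := h.s_pos
  have hud : UniqueDiffOn ℝ (Icc 0 s) := uniqueDiffOn_Icc hs
  have hdc : ContinuousOn (derivWithin γ (Icc 0 s)) (Icc 0 s) :=
    h.contDiff.continuousOn_derivWithin hud le_rfl
  let u : ℝ → E3 := fun t => derivWithin γ (Icc 0 s) (projIcc 0 s hs.le t)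
  have hu_eq : ∀ t ∈ Icc 0 s, derivWithin γ (Icc 0 s) t = u t := by
    intro t ht; simp only [u, projIcc_of_mem hs.le ht]
  have huc : Continuous u := by
    have := (continuousOn_iff_continuous_domRestrict.1 hdc).comp (continuous_projIcc (h := hs.le))
    exact this
  obtain ⟨F, hF⟩ := h.piecewiseC2
  have hpw : ∀ t ∈ Ioo 0 s, t ∉ F → ∃ d : E3, HasDerivAt u d t ∧ ‖d‖ ≤ 1 := by
    intro t ht htF
    obtain ⟨d, hd, hd1⟩ := hF t (Ioo_subset_Icc_self ht) htF
    refine ⟨d, ?_, hd1⟩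
    have hn : Icc 0 s ∈ nhds t := Icc_mem_nhds ht.1 ht.2
    refine (hd.hasDerivAt hn).congr_of_eventuallyEq ?_
    filter_upwards [hn] with r hr
    exact (hu_eq r hr).symm
  have hlip0 : ∀ a b, a ≤ b → ‖u b - u a‖ ≤ b - a := by
    intro a b hab
    let a' : ℝ := ((projIcc 0 s hs.le a : Icc (0:ℝ) s) : ℝ)
    let b' : ℝ := ((projIcc 0 s hs.le b : Icc (0:ℝ) s) : ℝ)
    have ha' : a' ∈ Icc 0 s := (projIcc 0 s hs.le a).2
    have hb' : b' ∈ Icc 0 s := (projIcc 0 s hs.le b).2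
    have hab' : a' ≤ b' := monotone_projIcc hs.le hab
    have e1 : u a = u a' := (hu_eq a' ha')
    have e2 : u b = u b' := (hu_eq b' hb')
    have := lip_aux u huc F a' b' hab' (fun t ht => hpw t ⟨ha'.1.trans_lt ht.1, ht.2.trans_le hb'.2⟩)
    rw [e1, e2]
    refine this.trans ?_
    simp only [a', b', coe_projIcc]
    rcases le_total s a with h1 | h1 <;> rcases le_total s b with h2 | h2 <;>
    rcases le_total 0 a with h3 | h3 <;> rcases le_total 0 b with h4 | h4 <;>
    simp [h1, h2, h3, h4, hs.le] <;> linarith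
  refine ⟨u, ⟨hs, huc, fun t => h.unitSpeed _ (projIcc 0 s hs.le t).2, ?_, F, hpw⟩, hu_eq, ?_⟩
  · intro a b
    rcases le_total a b with hab | hab
    · rw [norm_sub_rev, abs_sub_comm]
      exact (hlip0 a b hab).trans (le_abs_self _)
    · exact (hlip0 b a hab).trans (le_abs_self _)
  · intro t ht
    have := intervalIntegral.integral_eq_sub_of_hasDeriv_right_of_le ht.1
      (f := γ) (f' := u) (h.contDiff.continuousOn.mono (Icc_subset_Icc_right ht.2))
      (fun r hr => by
        have hr' : r ∈ Ioo 0 s := ⟨hr.1, hr.2.trans_le ht.2⟩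
        have hd := (h.contDiff.differentiableOn one_ne_zero r
          (Ioo_subset_Icc_self hr')).hasDerivWithinAt
        rw [hu_eq r (Ioo_subset_Icc_self hr')] at hd
        exact (hd.hasDerivAt (Icc_mem_nhds hr'.1 hr'.2)).hasDerivWithinAt)
      (huc.intervalIntegrable _ _)
    rw [this]; abel


structure Adm (v : E3) (p : ℝ → E3) : Prop where
  cont : Continuous p
  ne : ∀ t ∈ Icc (0:ℝ) 1, p t ≠ 0
  pw : ∃ F : Finset ℝ, ∀ t ∈ Ioo (0:ℝ) 1, t ∉ F → ∃ d : E3, HasDerivAt p d t ∧ ‖d‖ ≤ ‖p t‖ ^ 2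
  int : ∫ t in (0:ℝ)..1, p t = v

def alen (p : ℝ → E3) (t : ℝ) : ℝ := ∫ r in (0:ℝ)..t, ‖p r‖

def sig (p : ℝ → E3) (t : unitInterval) : unitInterval :=
  projIcc 0 1 zero_le_one (alen p t / alen p 1)

def the (p : ℝ → E3) : unitInterval → unitInterval := Function.invFun (sig p)

/-- inverse of arclength -/
def The (p : ℝ → E3) (z : ℝ) : ℝ := the p (projIcc 0 1 zero_le_one (z / alen p 1))

def dir (p : ℝ → E3) (z : ℝ) : E3 := ‖p (The p z)‖⁻¹ • p (The p z)

def crv (x : E3) (p : ℝ → E3) (r : ℝ) : E3 := x + ∫ z in (0:ℝ)..r, dir p z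

section basic
variable {v : E3} {p : ℝ → E3}

lemma alen_hasDerivAt (h : Continuous p) (t : ℝ) : HasDerivAt (alen p) ‖p t‖ t :=
  intervalIntegral.integral_hasDerivAt_right (h.norm.intervalIntegrable _ _)
    (h.norm.stronglyMeasurableAtFilter _ _) h.norm.continuousAt

lemma alen_zero : alen p 0 = 0 := by simp [alen]

lemma alen_mono (h : Adm v p) : StrictMonoOn (alen p) (Icc 0 1) := by
  refine strictMonoOn_of_deriv_pos (convex_Icc 0 1)
    (fun t _ => (alen_hasDerivAt h.cont t).continuousAt.continuousWithinAt) (fun t ht => ?_)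
  rw [(alen_hasDerivAt h.cont t).deriv]
  rw [interior_Icc] at ht
  exact norm_pos_iff.2 (h.ne t (Ioo_subset_Icc_self ht))

lemma alen_pos (h : Adm v p) : 0 < alen p 1 := by
  have := alen_mono h (left_mem_Icc.2 zero_le_one) (right_mem_Icc.2 zero_le_one) zero_lt_one
  rwa [alen_zero] at this

lemma alen_div_mem (h : Adm v p) (t : unitInterval) : alen p t / alen p 1 ∈ Icc (0:ℝ) 1 := by
  have hp := alen_pos h
  have m := (alen_mono h).monotoneOn
  have h1 := m (left_mem_Icc.2 zero_le_one) t.2 t.2.1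
  have h2 := m t.2 (right_mem_Icc.2 zero_le_one) t.2.2
  rw [alen_zero] at h1
  exact ⟨by positivity, (div_le_one hp).2 h2⟩

lemma sig_coe (h : Adm v p) (t : unitInterval) : (sig p t : ℝ) = alen p t / alen p 1 := by
  rw [sig, projIcc_of_mem zero_le_one (alen_div_mem h t)]

lemma sig_bij (h : Adm v p) : Function.Bijective (sig p) := by
  have hp := alen_pos h
  constructor
  · intro a b hab
    have := congrArg (fun z : unitInterval => (z : ℝ)) hab
    simp only [sig_coe h] at this
    rw [div_left_inj' hp.ne'] at this
    exact Subtype.ext ((alen_mono h).injOn a.2 b.2 this)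
  · intro z
    have hz : (z : ℝ) * alen p 1 ∈ Icc (alen p 0) (alen p 1) := by
      rw [alen_zero]
      exact ⟨mul_nonneg z.2.1 hp.le, mul_le_of_le_one_left hp.le z.2.2⟩
    obtain ⟨t, ht, hte⟩ := intermediate_value_Icc zero_le_one
      (f := alen p) (fun t _ => (alen_hasDerivAt h.cont t).continuousAt.continuousWithinAt) hz
    refine ⟨⟨t, ht⟩, Subtype.ext ?_⟩
    rw [sig_coe h]
    simp only [hte]
    field_simp

lemma sig_the (h : Adm v p) (z : unitInterval) : sig p (the p z) = z :=
  Function.rightInverse_invFun (sig_bij h).2 z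

lemma the_sig (h : Adm v p) (z : unitInterval) : the p (sig p z) = z :=
  Function.leftInverse_invFun (sig_bij h).1 z

lemma the_family {K : Type*} [TopologicalSpace K] [CompactSpace K] [T2Space K]
    (P : K → ℝ → E3) (hP : Continuous (Function.uncurry P)) (h : ∀ k, Adm v (P k)) :
    Continuous (fun z : K × unitInterval => the (P z.1) z.2) ∧ Continuous (fun k => alen (P k) 1) := by
  have c1 : Continuous (fun k => alen (P k) 1) :=
    intervalIntegral.continuous_parametric_intervalIntegral_of_continuous (f := fun k r => ‖P k r‖)
      hP.norm continuous_const
  have c2 : Continuous (fun z : K × unitInterval => alen (P z.1) z.2) :=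
    intervalIntegral.continuous_parametric_intervalIntegral_of_continuous
      (f := fun (z : K × unitInterval) r => ‖P z.1 r‖)
      (hP.norm.comp (f := fun z : (K × unitInterval) × ℝ => (z.1.1, z.2)) (by fun_prop))
      (by fun_prop)
  have c3 : Continuous (fun z : K × unitInterval => (z.1, sig (P z.1) z.2)) := by
    refine continuous_fst.prodMk (continuous_projIcc.comp (c2.div (c1.comp continuous_fst) ?_))
    exact fun z => (alen_pos (h z.1)).ne'
  let e : K × unitInterval ≃ K × unitInterval :=
    { toFun := fun z => (z.1, sig (P z.1) z.2)
      invFun := fun z => (z.1, the (P z.1) z.2)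
      left_inv := fun z => by simp [the_sig (h z.1)]
      right_inv := fun z => by simp [sig_the (h z.1)] }
  have c4 := (Continuous.homeoOfEquivCompactToT2 (f := e) c3).symm.continuous
  exact ⟨continuous_snd.comp c4, c1⟩

lemma The_mem (z : ℝ) : The p z ∈ Icc (0:ℝ) 1 := (the p _).2

lemma The_cont (h : Adm v p) : Continuous (The p) := by
  have := (the_family (K := Unit) (fun _ => p) (h.cont.comp continuous_snd) (fun _ => h)).1
  have h2 : Continuous (the p) := this.comp (f := fun z => ((), z)) (by fun_prop)
  exact continuous_subtype_val.comp (h2.comp (continuous_projIcc.comp (by fun_prop)))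

lemma alen_The (h : Adm v p) {z : ℝ} (hz : z ∈ Icc 0 (alen p 1)) : alen p (The p z) = z := by
  have hp := alen_pos h
  have h1 := sig_the h (projIcc 0 1 zero_le_one (z / alen p 1))
  have h2 := congrArg (fun z : unitInterval => (z : ℝ)) h1
  have hm : z / alen p 1 ∈ Icc (0:ℝ) 1 :=
    ⟨div_nonneg hz.1 hp.le, (div_le_one hp).2 hz.2⟩
  simp only [sig_coe h, projIcc_of_mem zero_le_one hm] at h2
  rw [div_left_inj' hp.ne'] at h2
  rw [The, projIcc_of_mem zero_le_one hm]
  exact h2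

lemma The_zero (h : Adm v p) : The p 0 = 0 := by
  have hp := alen_pos h
  refine (alen_mono h).injOn (The_mem _) (left_mem_Icc.2 zero_le_one) ?_
  rw [alen_The h ⟨le_rfl, hp.le⟩, alen_zero]

lemma The_one (h : Adm v p) : The p (alen p 1) = 1 := by
  have hp := alen_pos h
  refine (alen_mono h).injOn (The_mem _) (right_mem_Icc.2 zero_le_one) ?_
  rw [alen_The h ⟨hp.le, le_rfl⟩]

lemma The_deriv (h : Adm v p) {z : ℝ} (hz : z ∈ Ioo 0 (alen p 1)) :
    HasDerivAt (The p) (‖p (The p z)‖⁻¹) z := by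
  refine HasDerivAt.of_local_left_inverse (f := alen p) (The_cont h).continuousAt
    (alen_hasDerivAt h.cont _) (norm_ne_zero_iff.2 (h.ne _ (The_mem z))) ?_
  filter_upwards [Icc_mem_nhds hz.1 hz.2] with y hy
  exact alen_The h hy

lemma dir_cont (h : Adm v p) : Continuous (dir p) := by
  have h1 := h.cont.comp (The_cont h)
  exact (h1.norm.inv₀ (fun z => norm_ne_zero_iff.2 (h.ne _ (The_mem z)))).smul h1

lemma dir_norm (h : Adm v p) (z : ℝ) : ‖dir p z‖ = 1 := by
  rw [dir, norm_smul, norm_inv, norm_norm]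
  exact inv_mul_cancel₀ (norm_ne_zero_iff.2 (h.ne _ (The_mem z)))

lemma crv_deriv (x : E3) (h : Adm v p) (r : ℝ) : HasDerivAt (crv x p) (dir p r) r := by
  have := intervalIntegral.integral_hasDerivAt_right ((dir_cont h).intervalIntegrable 0 r)
    ((dir_cont h).stronglyMeasurableAtFilter _ _) (dir_cont h).continuousAt
  exact this.const_add x

lemma crv_derivWithin (x : E3) (h : Adm v p) {r : ℝ} (hr : r ∈ Icc 0 (alen p 1)) :
    derivWithin (crv x p) (Icc 0 (alen p 1)) r = dir p r :=
  (crv_deriv x h r).hasDerivWithinAt.derivWithin (uniqueDiffOn_Icc (alen_pos h) r hr)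

lemma crv_end (x : E3) (h : Adm v p) : crv x p (alen p 1) = x + v := by
  have hp := alen_pos h
  have hH : ∀ t, HasDerivAt (fun t => ∫ r in (0:ℝ)..t, p r) (p t) t := fun t =>
    intervalIntegral.integral_hasDerivAt_right (h.cont.intervalIntegrable _ _)
    (h.cont.stronglyMeasurableAtFilter _ _) h.cont.continuousAt
  have := intervalIntegral.integral_eq_sub_of_hasDerivAt_of_le hp.le
    (f := fun z => ∫ r in (0:ℝ)..(The p z), p r) (f' := dir p)
    (fun z _ => ((hH (The p z)).continuousAt.comp
      (f := The p) (The_cont h).continuousAt).continuousWithinAt)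
    (fun z hz => HasDerivAt.scomp z (hH (The p z)) (The_deriv h hz))
    ((dir_cont h).intervalIntegrable _ _)
  rw [crv, this, The_one h, The_zero h, h.int]
  simp

lemma normalize_deriv {p : ℝ → E3} {d : E3} {t : ℝ} (h : HasDerivAt p d t) (h0 : p t ≠ 0) :
    ∃ d' : E3, HasDerivAt (fun t => ‖p t‖⁻¹ • p t) d' t ∧ ‖d'‖ ≤ ‖d‖ / ‖p t‖ := by
  have hn : 0 < ‖p t‖ := norm_pos_iff.2 h0
  have h1 : HasDerivAt (fun t => ‖p t‖) (inner ℝ (p t) d / ‖p t‖) t := by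
    have h2 := (h.norm_sq).sqrt (by positivity)
    simp only [Real.sqrt_sq (norm_nonneg _)] at h2
    convert h2 using 1
    field_simp
  have h3 := (h1.inv hn.ne').smul h
  refine ⟨_, h3, ?_⟩
  refine abs_le_of_sq_le_sq' ?_ (by positivity) |>.2
  set c := inner ℝ (p t) d with hc
  have e : ∀ a b : ℝ, ‖a • d + b • p t‖ ^ 2 = a ^ 2 * ‖d‖ ^ 2 + 2 * a * b * c + b ^ 2 * ‖p t‖ ^ 2 := by
    intro a b
    rw [norm_add_sq_real, norm_smul, norm_smul, inner_smul_left, inner_smul_right, real_inner_comm,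
      ← hc, mul_pow, mul_pow]
    simp; ring
  simp only [Pi.inv_apply] at *
  rw [e]
  have : (‖p t‖⁻¹) ^ 2 * ‖d‖ ^ 2 + 2 * ‖p t‖⁻¹ * (-(c / ‖p t‖) / ‖p t‖ ^ 2) * c
      + (-(c / ‖p t‖) / ‖p t‖ ^ 2) ^ 2 * ‖p t‖ ^ 2 = (‖d‖ / ‖p t‖) ^ 2 - (c / ‖p t‖ ^ 2) ^ 2 := by
    field_simp; ring
  rw [this]
  nlinarith [sq_nonneg (c / ‖p t‖ ^ 2)]

lemma crv_isOne (x : E3) (h : Adm v p) : IsOneConstrained (alen p 1) (crv x p) where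
  s_pos := alen_pos h
  contDiff := by
    have : ContDiff ℝ 1 (crv x p) := by
      rw [contDiff_one_iff_deriv]
      refine ⟨fun r => (crv_deriv x h r).differentiableAt, ?_⟩
      rw [funext fun r => (crv_deriv x h r).deriv]
      exact dir_cont h
    exact this.contDiffOn
  unitSpeed := fun t ht => by rw [crv_derivWithin x h ht, dir_norm h]
  piecewiseC2 := by
    obtain ⟨F, hF⟩ := h.pw
    refine ⟨F.image (alen p) ∪ {0, alen p 1}, fun t ht htF => ?_⟩
    simp only [Finset.mem_union, Finset.mem_image, Finset.mem_insert, Finset.mem_singleton,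
      not_or, not_exists, not_and] at htF
    obtain ⟨h1, h2, h3⟩ := htF
    have ht' : t ∈ Ioo 0 (alen p 1) := ⟨lt_of_le_of_ne ht.1 (Ne.symm h2), lt_of_le_of_ne ht.2 h3⟩
    have hT : The p t ∈ Ioo (0:ℝ) 1 := by
      refine ⟨lt_of_le_of_ne (The_mem t).1 (fun e => h2 ?_),
        lt_of_le_of_ne (The_mem t).2 (fun e => h3 ?_)⟩
      · rw [← alen_The h ht, ← e, alen_zero]
      · conv_lhs => rw [← alen_The h ht, e]
    obtain ⟨d, hd, hd1⟩ := hF (The p t) hT (fun hm => h1 _ hm (alen_The h ht))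
    have hne := h.ne _ (The_mem (p := p) t)
    have hn : 0 < ‖p (The p t)‖ := norm_pos_iff.2 hne
    obtain ⟨d', hd', hd1'⟩ := normalize_deriv hd hne
    refine ⟨‖p (The p t)‖⁻¹ • d', ?_, ?_⟩
    · have h4 := HasDerivAt.scomp t hd' (The_deriv h ht')
      refine h4.hasDerivWithinAt.congr (fun r hr => ?_) ?_
      · exact crv_derivWithin x h hr
      · exact crv_derivWithin x h ht
    · rw [norm_smul, norm_inv, norm_norm, inv_mul_le_iff₀ hn]
      refine hd1'.trans ?_
      rw [div_le_iff₀ hn]; nlinarith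

end basic

def el (x y : E3) {p : ℝ → E3} (h : Adm (y - x) p) : SigmaSpace x y :=
  ⟨(alen p 1, crv x p), crv_isOne x h, by simp [crv], by
    simp only [crv_end x h]; abel⟩

lemma The_scale {v : E3} {p : ℝ → E3} (h : Adm v p) (t : unitInterval) :
    The p (t * alen p 1) = the p t := by
  rw [The, mul_div_cancel_right₀ _ (alen_pos h).ne', projIcc_val]

lemma unifFun_cont {K : Type*} [TopologicalSpace K] (f : K → unitInterval → E3)
    (hf : Continuous (Function.uncurry f)) : Continuous (fun k => UniformFun.ofFun (f k)) := by
  let g : K → C(unitInterval, E3) := fun k => ⟨f k, hf.comp (by fun_prop : Continuous fun t => (k, t))⟩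
  have hg : Continuous g := ContinuousMap.continuous_of_continuous_uncurry _ hf
  rw [continuous_iff_continuousAt]
  intro k
  rw [ContinuousAt, UniformFun.tendsto_iff_tendstoUniformly]
  have := (continuous_iff_continuousAt.1 hg) k
  rw [ContinuousAt, ContinuousMap.tendsto_iff_tendstoUniformly] at this
  exact this

lemma el_cont (x y : E3) (P : unitInterval → ℝ → E3) (hP : Continuous (Function.uncurry P))
    (h : ∀ k, Adm (y - x) (P k)) : Continuous (fun k => el x y (h k)) := by
  obtain ⟨c1, c2⟩ := the_family P hP h
  have c3 : Continuous (fun z : unitInterval × ℝ => The (P z.1) z.2) := by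
    refine continuous_subtype_val.comp (c1.comp (f := fun z : unitInterval × ℝ =>
      (z.1, projIcc 0 1 zero_le_one (z.2 / alen (P z.1) 1)))
      (continuous_fst.prodMk (continuous_projIcc.comp
        (continuous_snd.div (c2.comp continuous_fst) (fun z => (alen_pos (h z.1)).ne')))))
  have c4 : Continuous (fun z : unitInterval × ℝ => dir (P z.1) z.2) := by
    have h1 : Continuous (fun z : unitInterval × ℝ => P z.1 (The (P z.1) z.2)) :=
      hP.comp (continuous_fst.prodMk c3)
    exact (h1.norm.inv₀ (fun z => norm_ne_zero_iff.2 ((h z.1).ne _ (The_mem _)))).smul h1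
  have c5 : Continuous (fun z : unitInterval × ℝ => crv x (P z.1) z.2) := by
    refine continuous_const.add ?_
    exact intervalIntegral.continuous_parametric_intervalIntegral_of_continuous
      (f := fun (z : unitInterval × ℝ) r => dir (P z.1) r)
      (c4.comp (f := fun z : (unitInterval × ℝ) × ℝ => (z.1.1, z.2)) (by fun_prop))
      (by fun_prop)
  rw [continuous_induced_rng]
  refine c2.prodMk (Continuous.prodMk ?_ ?_)
  · refine unifFun_cont (fun k (t : unitInterval) => crv x (P k) (t * alen (P k) 1)) ?_
    exact c5.comp (f := fun z : unitInterval × unitInterval => (z.1, (z.2 : ℝ) * alen (P z.1) 1))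
      (continuous_fst.prodMk ((continuous_subtype_val.comp continuous_snd).mul
        (c2.comp continuous_fst)))
  · have : (fun k => UniformFun.ofFun (fun t : unitInterval => derivWithin (crv x (P k))
        (Icc 0 (alen (P k) 1)) ((t : ℝ) * alen (P k) 1))) =
        (fun k => UniformFun.ofFun (fun t : unitInterval => dir (P k) (t * alen (P k) 1))) := by
      funext k
      congr 1
      funext t
      have := alen_pos (h k)
      refine crv_derivWithin x (h k) ⟨mul_nonneg t.2.1 this.le, mul_le_of_le_one_left this.le t.2.2⟩
    show Continuous (fun k => UniformFun.ofFun (fun t : unitInterval => derivWithin (crv x (P k))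
        (Icc 0 (alen (P k) 1)) ((t : ℝ) * alen (P k) 1)))
    rw [this]
    refine unifFun_cont (fun k (t : unitInterval) => dir (P k) (t * alen (P k) 1)) ?_
    exact c4.comp (f := fun z : unitInterval × unitInterval => (z.1, (z.2 : ℝ) * alen (P z.1) 1))
      (continuous_fst.prodMk ((continuous_subtype_val.comp continuous_snd).mul
        (c2.comp continuous_fst)))

lemma el_joined (x y : E3) (P : unitInterval → ℝ → E3) (hP : Continuous (Function.uncurry P))
    (h : ∀ k, Adm (y - x) (P k)) : Joined (el x y (h 0)) (el x y (h 1)) :=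
  ⟨⟨⟨fun k => el x y (h k), el_cont x y P hP h⟩, rfl, rfl⟩⟩

lemma el_congr (x y : E3) {p p' : ℝ → E3} (h : Adm (y - x) p) (h' : Adm (y - x) p')
    (e : EqOn p p' (Icc 0 1)) : el x y h = el x y h' := by
  have e1 : ∀ t ∈ Icc (0:ℝ) 1, alen p t = alen p' t := by
    intro t ht
    refine intervalIntegral.integral_congr (fun r hr => ?_)
    rw [uIcc_of_le ht.1] at hr
    simp only [e ⟨hr.1, hr.2.trans ht.2⟩]
  have e2 := e1 1 (right_mem_Icc.2 zero_le_one)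
  have e3 : sig p = sig p' := by
    funext t; simp only [sig, e1 t t.2, e2]
  have e4 : the p = the p' := by simp only [the, e3]
  have e5 : The p = The p' := by funext z; simp only [The, e4, e2]
  have e6 : dir p = dir p' := by
    funext z; simp only [dir, e5, e (The_mem (p := p') z)]
  have e7 : crv x p = crv x p' := by funext r; simp only [crv, e6]
  exact Subtype.ext (Prod.ext e2 e7)

/-- the velocity of a curve given by its tangent, rescaled to `[0,1]` -/
lemma adm_tan {s : ℝ} {u : ℝ → E3} (h : Tan s u) (v : E3) (hv : ∫ t in (0:ℝ)..s, u t = v) :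
    Adm v (fun t => s • u (s * t)) where
  cont := by have := h.cont; fun_prop
  ne := fun t _ => by
    rw [← norm_ne_zero_iff, norm_smul, h.unit]; simpa using h.pos.ne'
  pw := by
    obtain ⟨F, hF⟩ := h.pw
    have hs := h.pos
    refine ⟨F.image (fun t => t / s), fun t ht htF => ?_⟩
    obtain ⟨d, hd, hd1⟩ := hF (s * t) ⟨mul_pos hs ht.1, by nlinarith [ht.2]⟩ (fun hm => htF
      (Finset.mem_image.2 ⟨_, hm, by field_simp⟩))
    have h1 : HasDerivAt (fun t => s * t) s t := by simpa using (hasDerivAt_id t).const_mul s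
    refine ⟨_, (HasDerivAt.scomp t hd h1).const_smul s, ?_⟩
    rw [norm_smul, norm_smul, norm_smul, h.unit, Real.norm_of_nonneg hs.le]
    nlinarith [mul_pos hs hs]
  int := by
    rw [intervalIntegral.integral_smul, intervalIntegral.integral_comp_mul_left (fun t => u t) h.pos.ne',
      smul_smul, mul_inv_cancel₀ h.pos.ne', one_smul, mul_zero, mul_one, hv]

lemma el_tan {x y : E3} (q : SigmaSpace x y) {u : ℝ → E3} (h : Tan q.1.1 u)
    (h1 : ∀ t ∈ Icc 0 q.1.1, derivWithin q.1.2 (Icc 0 q.1.1) t = u t)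
    (h2 : ∀ t ∈ Icc 0 q.1.1, q.1.2 t = q.1.2 0 + ∫ r in (0:ℝ)..t, u r)
    (ha : Adm (y - x) (fun t => q.1.1 • u (q.1.1 * t))) : Joined q (el x y ha) := by
  set s := q.1.1 with hs
  set p : ℝ → E3 := fun t => s • u (s * t) with hp
  have hpos := h.pos
  have e1 : ∀ t, alen p t = s * t := by
    intro t
    have : ∀ r, ‖p r‖ = s := fun r => by
      rw [hp]; simp only [norm_smul, h.unit, Real.norm_of_nonneg hpos.le, mul_one]
    simp only [alen, this]
    simp [mul_comm]
  have e2 : alen p 1 = s := by rw [e1, mul_one]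
  have e3 : ∀ z ∈ Icc 0 s, The p z = z / s := by
    intro z hz
    have := alen_The ha (z := z) (by rw [e2]; exact hz)
    rw [e1] at this
    rw [eq_div_iff hpos.ne', mul_comm]; exact this
  have e4 : ∀ z ∈ Icc 0 s, dir p z = u z := by
    intro z hz
    rw [dir, e3 z hz, hp]
    simp only [norm_smul, h.unit, Real.norm_of_nonneg hpos.le, mul_one, smul_smul]
    rw [inv_mul_cancel₀ hpos.ne', one_smul, mul_div_cancel₀ _ hpos.ne']
  have e5 : ∀ z ∈ Icc 0 s, crv x p z = q.1.2 z := by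
    intro z hz
    rw [h2 z hz, q.2.2.1, crv]
    congr 1
    refine intervalIntegral.integral_congr (fun r hr => ?_)
    rw [uIcc_of_le hz.1] at hr
    exact e4 r ⟨hr.1, hr.2.trans hz.2⟩
  have hin : Inseparable q (el x y ha) := by
    refine (Topology.IsInducing.inseparable_iff (Topology.IsInducing.mk rfl : Topology.IsInducing (fun q : SigmaSpace x y =>
      ((q.1.1,
        UniformFun.ofFun (fun t : unitInterval => q.1.2 ((t : ℝ) * q.1.1)),
        UniformFun.ofFun (fun t : unitInterval =>
          derivWithin q.1.2 (Icc 0 q.1.1) ((t : ℝ) * q.1.1))) :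
        ℝ × UniformFun unitInterval E3 × UniformFun unitInterval E3)))).1 ?_
    have hm : ∀ t : unitInterval, (t : ℝ) * s ∈ Icc 0 s := fun t =>
      ⟨mul_nonneg t.2.1 hpos.le, mul_le_of_le_one_left hpos.le t.2.2⟩
    refine Inseparable.of_eq (Prod.ext e2.symm (Prod.ext ?_ ?_))
    · show UniformFun.ofFun _ = UniformFun.ofFun _
      congr 1
      funext t
      show _ = crv x p (t * alen p 1)
      rw [e2, e5 _ (hm t)]
    · show UniformFun.ofFun _ = UniformFun.ofFun _
      congr 1
      funext t
      show _ = derivWithin (crv x p) (Icc 0 (alen p 1)) (t * alen p 1)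
      rw [crv_derivWithin x ha (by rw [e2]; exact hm t), e2, e4 _ (hm t)]
      exact h1 _ (hm t)
  exact (hin.joinedIn (mem_univ _) (mem_univ _)).joined


def Tmap (v Q : E3) : E3 ≃ₗᵢ[ℝ] E3 :=
  ((ℝ ∙ (‖v‖ • Q + ‖Q‖ • v)).reflection).trans ((ℝ ∙ v).reflection)

lemma refl_self (v : E3) : (ℝ ∙ v).reflection v = v :=
  Submodule.reflection_eq_self_iff v |>.2 (Submodule.mem_span_singleton_self v)

lemma Tmap_Q {v Q : E3} (h : 0 < inner ℝ v Q) : Tmap v Q Q = (‖Q‖ / ‖v‖) • v := by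
  have hv : v ≠ 0 := by rintro rfl; simp at h
  have hQ : Q ≠ 0 := by rintro rfl; simp at h
  have hv' : 0 < ‖v‖ := norm_pos_iff.2 hv
  have hQ' : 0 < ‖Q‖ := norm_pos_iff.2 hQ
  have h1 : (ℝ ∙ (‖v‖ • Q + ‖Q‖ • v)).reflection Q = (‖Q‖ / ‖v‖) • v := by
    rw [Submodule.reflection_singleton_apply]
    have e1 : inner ℝ (‖v‖ • Q + ‖Q‖ • v) Q = ‖v‖ * ‖Q‖ ^ 2 + ‖Q‖ * inner ℝ v Q := by
      rw [inner_add_left, inner_smul_left, inner_smul_left, real_inner_self_eq_norm_sq]; simp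
    have e2 : ‖‖v‖ • Q + ‖Q‖ • v‖ ^ 2 = 2 * ‖v‖ * (‖v‖ * ‖Q‖ ^ 2 + ‖Q‖ * inner ℝ v Q) := by
      rw [norm_add_sq_real, norm_smul, norm_smul, inner_smul_left, inner_smul_right,
        real_inner_comm]
      simp; ring
    have e3 : 0 < ‖v‖ * ‖Q‖ ^ 2 + ‖Q‖ * inner ℝ v Q := by positivity
    have e4 : (2 : ℝ) * ((‖v‖ * ‖Q‖ ^ 2 + ‖Q‖ * inner ℝ v Q) /
        (2 * ‖v‖ * (‖v‖ * ‖Q‖ ^ 2 + ‖Q‖ * inner ℝ v Q))) = ‖v‖⁻¹ := by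
      field_simp
    rw [← Nat.cast_smul_eq_nsmul ℝ, smul_smul]
    simp only [RCLike.ofReal_real_eq_id, id_eq]
    rw [e1, e2]
    push_cast
    rw [e4, smul_add, smul_smul, smul_smul, inv_mul_cancel₀ hv'.ne', one_smul, div_eq_inv_mul]
    abel
  show (ℝ ∙ v).reflection ((ℝ ∙ (‖v‖ • Q + ‖Q‖ • v)).reflection Q) = _
  rw [h1, map_smul, refl_self]

lemma Tmap_smul {v : E3} {c : ℝ} (hc : 0 < c) (z : E3) : Tmap v (c • v) z = z := by
  by_cases hv : v = 0
  · subst hv; simp [Tmap]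
  have : ‖v‖ • (c • v) + ‖c • v‖ • v = (2 * ‖v‖ * c) • v := by
    rw [norm_smul, smul_smul, ← add_smul, Real.norm_of_nonneg hc.le]; congr 1; ring
  have hu : IsUnit (2 * ‖v‖ * c) := by
    rw [isUnit_iff_ne_zero]; have := norm_pos_iff.2 hv; positivity
  show (ℝ ∙ v).reflection ((ℝ ∙ (‖v‖ • (c • v) + ‖c • v‖ • v)).reflection z) = _
  have key : ∀ (W : Submodule ℝ E3) [W.HasOrthogonalProjection], W = (ℝ ∙ v) →
      (ℝ ∙ v).reflection (W.reflection z) = z := by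
    intro W _ h; subst h; exact Submodule.reflection_reflection _ z
  exact key _ (by rw [this, Submodule.span_singleton_smul_eq hu])

lemma Tmap_cont {K : Type*} [TopologicalSpace K] (v : E3) (Q z : K → E3) (hQ : Continuous Q)
    (hz : Continuous z) (h : ∀ k, 0 < inner ℝ v (Q k)) :
    Continuous (fun k => Tmap v (Q k) (z k)) := by
  refine ((ℝ ∙ v).reflection).continuous.comp ?_
  have : (fun k => (ℝ ∙ (‖v‖ • Q k + ‖Q k‖ • v)).reflection (z k)) = fun k =>
    (2 * (inner ℝ (‖v‖ • Q k + ‖Q k‖ • v) (z k) / ‖‖v‖ • Q k + ‖Q k‖ • v‖ ^ 2)) •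
      (‖v‖ • Q k + ‖Q k‖ • v) - z k := by
    funext k
    rw [Submodule.reflection_singleton_apply, ← Nat.cast_smul_eq_nsmul ℝ, smul_smul]
    simp
  show Continuous (fun k => (ℝ ∙ (‖v‖ • Q k + ‖Q k‖ • v)).reflection (z k))
  rw [this]
  have hb : ∀ k, ‖‖v‖ • Q k + ‖Q k‖ • v‖ ^ 2 ≠ 0 := by
    intro k
    have hk := h k
    have hv : v ≠ 0 := by rintro rfl; simp at hk
    have hv' : 0 < ‖v‖ := norm_pos_iff.2 hv
    refine pow_ne_zero 2 (norm_ne_zero_iff.2 (fun h0 => ?_))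
    have : inner ℝ v (‖v‖ • Q k + ‖Q k‖ • v) = 0 := by rw [h0, inner_zero_right]
    rw [inner_add_right, inner_smul_right, inner_smul_right, real_inner_self_eq_norm_sq] at this
    have : 0 < ‖v‖ * inner ℝ v (Q k) := by positivity
    have : 0 ≤ ‖Q k‖ * ‖v‖ ^ 2 := by positivity
    linarith
  have c1 : Continuous fun k => inner ℝ (‖v‖ • Q k + ‖Q k‖ • v) (z k) := by fun_prop
  have c2 : Continuous fun k => ‖‖v‖ • Q k + ‖Q k‖ • v‖ ^ 2 := by fun_prop
  exact ((continuous_const.mul (c1.div c2 hb)).smul (by fun_prop)).sub hz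

lemma adm_const {v : E3} (hv : v ≠ 0) : Adm v (fun _ => v) where
  cont := continuous_const
  ne := fun _ _ => hv
  pw := ⟨∅, fun t _ _ => ⟨0, hasDerivAt_const _ _, by simp⟩⟩
  int := by simp

lemma short_inner_pos {s : ℝ} {u : ℝ → E3} (h : Tan s u) (hs : s < Real.pi) {t : ℝ}
    (ht : t ∈ Icc 0 s) : 0 < inner ℝ (∫ t in (0:ℝ)..s, u t) (u t) := by
  have h1 := inner_integral_ge h 0 s t ht.1 ht.2 (by linarith)
  refine lt_of_lt_of_le ?_ h1
  have hpos := h.pos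
  have a1 : 0 ≤ Real.sin (t - 0) :=
    Real.sin_nonneg_of_nonneg_of_le_pi (by linarith [ht.1]) (by linarith [ht.2])
  have a2 : 0 ≤ Real.sin (s - t) :=
    Real.sin_nonneg_of_nonneg_of_le_pi (by linarith [ht.2]) (by linarith [ht.1])
  rcases ht.1.eq_or_lt with h0 | h0
  · have : 0 < Real.sin (s - t) := Real.sin_pos_of_pos_of_lt_pi (by linarith) (by linarith)
    linarith
  · have : 0 < Real.sin (t - 0) := Real.sin_pos_of_pos_of_lt_pi (by linarith) (by linarith [ht.2])
    linarith

lemma short_chord {s : ℝ} {u : ℝ → E3} (h : Tan s u) (hs : s < Real.pi) {r : ℝ}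
    (hr : r ∈ Icc 0 s) : ‖∫ t in (0:ℝ)..r, u t‖ ≤ ‖∫ t in (0:ℝ)..s, u t‖ := by
  have hH : ∀ t, HasDerivAt (fun t => ∫ r in (0:ℝ)..t, u r) (u t) t := fun t =>
    intervalIntegral.integral_hasDerivAt_right (h.cont.intervalIntegrable _ _)
    (h.cont.stronglyMeasurableAtFilter _ _) h.cont.continuousAt
  have hm : MonotoneOn (fun t => ‖∫ r in (0:ℝ)..t, u r‖ ^ 2) (Icc 0 s) := by
    refine monotoneOn_of_deriv_nonneg (convex_Icc _ _)
      (fun t _ => (hH t).norm_sq.continuousAt.continuousWithinAt)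
      (fun t _ => (hH t).norm_sq.differentiableAt.differentiableWithinAt) (fun t ht => ?_)
    rw [interior_Icc] at ht
    rw [(hH t).norm_sq.deriv]
    have := inner_integral_ge h 0 t t ht.1.le le_rfl (by linarith [ht.2])
    have a1 : 0 ≤ Real.sin (t - 0) :=
      Real.sin_nonneg_of_nonneg_of_le_pi (by linarith [ht.1]) (by linarith [ht.2])
    simp only [sub_self, Real.sin_zero] at this
    linarith
  have := hm hr (right_mem_Icc.2 h.pos.le) hr.2
  exact abs_le_of_sq_le_sq' this (norm_nonneg _) |>.2

lemma short_joined {x y : E3} (hxy : y - x ≠ 0) (q : SigmaSpace x y) (hs : q.1.1 < Real.pi) :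
    Joined q (el x y (adm_const hxy)) := by
  obtain ⟨u, hu, h1, h2⟩ := exists_tan q.2.1
  set s := q.1.1 with hsdef
  set v := y - x with hv
  have hpos := hu.pos
  have huc := hu.cont
  have hint : ∫ t in (0:ℝ)..s, u t = v := by
    have := h2 s (right_mem_Icc.2 hpos.le)
    rw [q.2.2.2, q.2.2.1] at this
    rw [hv, this]; abel
  have ha := adm_tan hu v hint
  have hvn : 0 < ‖v‖ := norm_pos_iff.2 hxy
  obtain ⟨Q, hQd⟩ : ∃ Q : unitInterval → E3, Q = fun σ : unitInterval => ∫ t in (0:ℝ)..1, u (σ * s * t) := ⟨_, rfl⟩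
  have hQd' : ∀ σ, Q σ = ∫ t in (0:ℝ)..1, u (σ * s * t) := fun σ => by rw [hQd]
  have hQc : Continuous Q := by
    rw [hQd]
    exact intervalIntegral.continuous_parametric_intervalIntegral_of_continuous'
      (f := fun (σ : unitInterval) t => u (σ * s * t)) (by fun_prop) 0 1
  have hmem : ∀ (σ : unitInterval) (t : ℝ), t ∈ Icc (0:ℝ) 1 → (σ : ℝ) * s * t ∈ Icc 0 s := by
    intro σ t ht
    have := σ.2.1
    have := σ.2.2
    exact ⟨by have := ht.1; positivity, by
      calc (σ : ℝ) * s * t ≤ 1 * s * 1 := by have := ht.1; have := ht.2; gcongr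
        _ = s := by ring⟩
  have hQp : ∀ σ, 0 < inner ℝ v (Q σ) := by
    intro σ
    have e : inner ℝ v (Q σ) = ∫ t in (0:ℝ)..1, inner ℝ v (u (σ * s * t)) := by
      have := (innerSL ℝ v).intervalIntegral_comp_comm (μ := MeasureTheory.volume)
        (Continuous.intervalIntegrable (u := fun t => u (σ * s * t)) (by fun_prop) 0 1)
      simp only [innerSL_apply_apply] at this
      rw [hQd', ← this]
    rw [e]
    refine intervalIntegral.intervalIntegral_pos_of_pos_on
      (Continuous.intervalIntegrable (by fun_prop) _ _) (fun t ht => ?_) zero_lt_one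
    rw [← hint]
    exact short_inner_pos hu hs (hmem σ t (Ioo_subset_Icc_self ht))
  have hQn : ∀ σ, 0 < ‖Q σ‖ := fun σ => norm_pos_iff.2 (fun h0 => by
    have := hQp σ; rw [h0] at this; simp at this)
  have hQs : ∀ σ : unitInterval, (σ * s : ℝ) * ‖Q σ‖ ≤ ‖v‖ := by
    intro σ
    have h3 : (σ * s : ℝ) • Q σ = ∫ t in (0:ℝ)..(σ * s), u t := by
      rw [hQd']
      rw [intervalIntegral.smul_integral_comp_mul_left (fun t => u t)]; simp
    have h4 : 0 ≤ (σ * s : ℝ) := mul_nonneg σ.2.1 hpos.le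
    have h5 := hmem σ 1 (right_mem_Icc.2 zero_le_one)
    rw [mul_one] at h5
    rw [← Real.norm_of_nonneg h4, ← norm_smul, h3, ← hint]
    exact short_chord hu hs h5
  obtain ⟨P, hPd⟩ : ∃ P : unitInterval → ℝ → E3,
    P = fun σ t => (‖v‖ / ‖Q σ‖) • Tmap v (Q σ) (u (σ * s * t)) := ⟨_, rfl⟩
  have hPd' : ∀ σ t, P σ t = (‖v‖ / ‖Q σ‖) • Tmap v (Q σ) (u (σ * s * t)) := fun σ t => by rw [hPd]
  have hPc : Continuous (Function.uncurry P) := by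
    rw [hPd]
    refine Continuous.smul (f := fun z : unitInterval × ℝ => ‖v‖ / ‖Q z.1‖)
      (g := fun z : unitInterval × ℝ => Tmap v (Q z.1) (u (z.1 * s * z.2))) ?_ ?_
    · exact continuous_const.div (hQc.comp continuous_fst).norm (fun z => (hQn z.1).ne')
    · exact Tmap_cont v (fun z : unitInterval × ℝ => Q z.1) (fun z => u (z.1 * s * z.2))
        (hQc.comp continuous_fst) (by fun_prop) (fun z => hQp z.1)
  have hPn : ∀ σ t, ‖P σ t‖ = ‖v‖ / ‖Q σ‖ := by
    intro σ t
    simp only [hPd']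
    rw [norm_smul, LinearIsometryEquiv.norm_map, hu.unit, mul_one, Real.norm_of_nonneg (by positivity)]
  have hP : ∀ σ, Adm v (P σ) := by
    intro σ
    refine ⟨hPc.uncurry_left σ, ?_, ?_, ?_⟩
    · intro t _
      rw [← norm_ne_zero_iff, hPn]
      have := hQn σ
      positivity
    · obtain ⟨F, hF⟩ := hu.pw
      rcases σ.2.1.eq_or_lt with h0 | h0
      · refine ⟨∅, fun t _ _ => ⟨0, ?_, by simp⟩⟩
        have : P σ = fun t => P σ 0 := by
          funext t
          simp only [hPd', ← h0, zero_mul]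
        rw [this]; exact hasDerivAt_const _ _
      · refine ⟨F.image (fun t => t / (σ * s)), fun t ht htF => ?_⟩
        have hσs : 0 < (σ : ℝ) * s := mul_pos h0 hpos
        have hσs' : (σ : ℝ) * s ≤ s := mul_le_of_le_one_left hpos.le σ.2.2
        obtain ⟨d, hd, hd1⟩ := hF (σ * s * t) ⟨mul_pos hσs ht.1, by nlinarith [ht.2, ht.1]⟩
          (fun hm => htF (Finset.mem_image.2 ⟨_, hm, by field_simp⟩))
        have h1 : HasDerivAt (fun t => (σ * s : ℝ) * t) (σ * s) t := by
          simpa using (hasDerivAt_id t).const_mul (σ * s : ℝ)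
        have h3 := HasDerivAt.scomp t hd h1
        have h4 := ((Tmap v (Q σ)).toContinuousLinearEquiv.toContinuousLinearMap.hasFDerivAt).comp_hasDerivAt t h3
        have h6 := h4.const_smul (‖v‖ / ‖Q σ‖)
        have h7 : P σ = fun t => (‖v‖ / ‖Q σ‖) • Tmap v (Q σ) (u (σ * s * t)) := by rw [hPd]
        refine ⟨_, by rw [h7]; exact h6, ?_⟩
        rw [hPn]
        have h5 : ‖(Tmap v (Q σ)).toContinuousLinearEquiv.toContinuousLinearMap
            ((σ * s : ℝ) • d)‖ = σ * s * ‖d‖ := by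
          rw [← Real.norm_of_nonneg hσs.le, ← norm_smul, Real.norm_of_nonneg hσs.le]
          exact (Tmap v (Q σ)).norm_map _
        rw [norm_smul, h5, Real.norm_of_nonneg (by positivity), sq]
        have hq := hQn σ
        gcongr
        rw [le_div_iff₀ hq]
        calc σ * s * ‖d‖ * ‖Q σ‖ ≤ σ * s * 1 * ‖Q σ‖ := by gcongr
          _ ≤ ‖v‖ := by rw [mul_one]; exact hQs σ
    · simp only [hPd']
      rw [intervalIntegral.integral_smul]
      have := (Tmap v (Q σ)).toContinuousLinearEquiv.toContinuousLinearMap.intervalIntegral_comp_comm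
        (μ := MeasureTheory.volume)
        (Continuous.intervalIntegrable (u := fun t => u (σ * s * t)) (by fun_prop) 0 1)
      have h3 : ∫ t in (0:ℝ)..1, Tmap v (Q σ) (u (σ * s * t)) = Tmap v (Q σ) (Q σ) := by
        conv_rhs => rw [hQd' σ]
        conv_rhs => rw [← hQd' σ]
        rw [hQd' σ] at *
        exact this
      rw [h3, Tmap_Q (hQp σ), smul_smul]
      have hq := (hQn σ).ne'
      have : ‖v‖ / ‖Q σ‖ * (‖Q σ‖ / ‖v‖) = 1 := by field_simp
      rw [this, one_smul]
  have hj := el_joined x y P hPc hP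
  have e0 : el x y (hP 0) = el x y (adm_const hxy) := by
    refine el_congr x y _ _ (fun t _ => ?_)
    have h3 : Q 0 = u 0 := by simp [hQd']
    have h4 : ∀ t, u ((0 : unitInterval) * s * t) = Q 0 := fun t => by rw [h3]; simp
    simp only [hPd']
    rw [h4, Tmap_Q (hQp 0), smul_smul]
    have hq := (hQn 0).ne'
    have : ‖v‖ / ‖Q 0‖ * (‖Q 0‖ / ‖v‖) = 1 := by field_simp
    rw [this, one_smul]
  have e1 : el x y (hP 1) = el x y ha := by
    refine el_congr x y _ _ (fun t _ => ?_)
    have h3 : Q 1 = s⁻¹ • v := by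
      rw [hQd']
      rw [← hint]
      simp only [Set.Icc.coe_one, one_mul]
      rw [intervalIntegral.integral_comp_mul_left (fun t => u t) hpos.ne']; simp
    simp only [hPd']
    rw [h3, Tmap_smul (by positivity), norm_smul, norm_inv, Real.norm_of_nonneg hpos.le]
    simp only [Set.Icc.coe_one, one_mul]
    congr 1
    field_simp
  rw [e0, e1] at hj
  exact (el_tan q hu h1 h2 ha).trans hj.symm


lemma unit_comb {w n : E3} (hw : ‖w‖ = 1) (hn : ‖n‖ = 1) (hwn : inner ℝ w n = 0) (a b : ℝ) :
    ‖a • w + b • n‖ ^ 2 = a ^ 2 + b ^ 2 := by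
  rw [norm_add_sq_real, norm_smul, norm_smul, inner_smul_left, inner_smul_right, hwn, hw, hn]
  simp

lemma unit_comb' {w n : E3} (hw : ‖w‖ = 1) (hn : ‖n‖ = 1) (hwn : inner ℝ w n = 0) (a b : ℝ)
    (hab : a ^ 2 + b ^ 2 = 1) : ‖a • w + b • n‖ = 1 := by
  have := unit_comb hw hn hwn a b
  rw [hab] at this
  exact (pow_left_inj₀ (norm_nonneg _) zero_le_one two_ne_zero).1 (by rw [this]; norm_num)

def stdc (v : E3) (m : ℕ) (L : ℝ) (w n : E3) (t : ℝ) : E3 :=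
  L • (Real.cos (2 * Real.pi * m * t) • w + Real.sin (2 * Real.pi * m * t) • n)
    + (1 - Real.cos (2 * Real.pi * t)) • v

lemma adm_std {v : E3} (hv : ‖v‖ < 2) {m : ℕ} (hm : 2 ≤ m) {L : ℝ} (hL : 4 * Real.pi * m ≤ L)
    {w n : E3} (hw : ‖w‖ = 1) (hn : ‖n‖ = 1) (hwn : inner ℝ w n = 0) : Adm v (stdc v m L w n) := by
  have hm' : (2 : ℝ) ≤ m := by exact_mod_cast hm
  have hpi := Real.pi_gt_three
  have hL16 : 24 ≤ L := by nlinarith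
  have hlow : ∀ t, L - 4 ≤ ‖stdc v m L w n t‖ := by
    intro t
    have h1 : ‖Real.cos (2 * Real.pi * m * t) • w + Real.sin (2 * Real.pi * m * t) • n‖ = 1 :=
      unit_comb' hw hn hwn _ _ (Real.cos_sq_add_sin_sq _)
    have h2 : ‖(1 - Real.cos (2 * Real.pi * t)) • v‖ ≤ 4 := by
      rw [norm_smul, Real.norm_of_nonneg (by linarith [Real.cos_le_one (2 * Real.pi * t)])]
      nlinarith [Real.neg_one_le_cos (2 * Real.pi * t), norm_nonneg v, Real.cos_le_one (2 * Real.pi * t)]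
    have h3 := norm_sub_le_norm_add (L • (Real.cos (2 * Real.pi * m * t) • w +
      Real.sin (2 * Real.pi * m * t) • n)) ((1 - Real.cos (2 * Real.pi * t)) • v)
    rw [norm_smul, h1, Real.norm_of_nonneg (by linarith)] at h3
    rw [stdc]
    linarith
  refine ⟨?_, ?_, ⟨∅, fun t _ _ => ?_⟩, ?_⟩
  · unfold stdc; fun_prop
  · intro t _
    rw [← norm_pos_iff]
    linarith [hlow t]
  · have a1 : HasDerivAt (fun t : ℝ => 2 * Real.pi * m * t) (2 * Real.pi * m) t := by
      simpa using (hasDerivAt_id t).const_mul (2 * Real.pi * m)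
    have a2 : HasDerivAt (fun t : ℝ => 2 * Real.pi * t) (2 * Real.pi) t := by
      simpa using (hasDerivAt_id t).const_mul (2 * Real.pi)
    have a3 := (((a1.cos.smul_const w).add (a1.sin.smul_const n)).const_smul L).add
      ((a2.cos.const_sub 1).smul_const v)
    refine ⟨_, a3, ?_⟩
    have h1 : ‖(-Real.sin (2 * Real.pi * m * t)) • w + Real.cos (2 * Real.pi * m * t) • n‖ = 1 :=
      unit_comb' hw hn hwn _ _ (by rw [neg_sq]; exact Real.sin_sq_add_cos_sq _)
    have e1 : (-Real.sin (2 * Real.pi * m * t) * (2 * Real.pi * m)) • w +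
      (Real.cos (2 * Real.pi * m * t) * (2 * Real.pi * m)) • n =
      (2 * Real.pi * m) • ((-Real.sin (2 * Real.pi * m * t)) • w + Real.cos (2 * Real.pi * m * t) • n) := by
      rw [smul_add, smul_smul, smul_smul]; congr 2 <;> ring
    refine (norm_add_le _ _).trans ?_
    rw [e1, norm_smul, norm_smul, norm_smul, h1]
    have h2 : ‖-(-Real.sin (2 * Real.pi * t) * (2 * Real.pi))‖ ≤ 2 * Real.pi := by
      rw [norm_neg, norm_mul, norm_neg, Real.norm_of_nonneg (r := 2 * Real.pi) (by positivity)]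
      have := Real.abs_sin_le_one (2 * Real.pi * t)
      rw [Real.norm_eq_abs]
      nlinarith
    have h3 : ‖-(-Real.sin (2 * Real.pi * t) * (2 * Real.pi))‖ * ‖v‖ ≤ 2 * Real.pi * 2 := by
      gcongr
    rw [Real.norm_of_nonneg (by linarith), Real.norm_of_nonneg (by positivity)]
    have h4 := hlow t
    have h5 : (L - 4) ^ 2 ≤ ‖stdc v m L w n t‖ ^ 2 := by
      have : 0 ≤ L - 4 := by linarith
      gcongr
    have h6 : L * (2 * Real.pi * m * 1) ≤ L * (L / 2) := by
      have : 0 ≤ L := by linarith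
      gcongr
      linarith
    have := Real.pi_lt_four
    nlinarith
  · have hm0 : (m : ℝ) ≠ 0 := by positivity
    have i1 : ∫ t in (0:ℝ)..1, Real.cos (2 * Real.pi * m * t) = 0 := by
      rw [intervalIntegral.integral_comp_mul_left (fun t => Real.cos t) (by positivity), integral_cos]
      have : Real.sin (2 * Real.pi * m * 1) = 0 := by
        rw [mul_one, mul_comm (2 * Real.pi)]
        have := Real.sin_nat_mul_pi (2 * m)
        push_cast at this
        rw [← this]; ring_nf
      rw [this]; simp
    have i2 : ∫ t in (0:ℝ)..1, Real.sin (2 * Real.pi * m * t) = 0 := by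
      rw [intervalIntegral.integral_comp_mul_left (fun t => Real.sin t) (by positivity), integral_sin]
      have : Real.cos (2 * Real.pi * m * 1) = 1 := by
        rw [mul_one, mul_comm (2 * Real.pi)]; exact Real.cos_nat_mul_two_pi m
      rw [this]; simp
    have i3 : ∫ t in (0:ℝ)..1, (1 - Real.cos (2 * Real.pi * t)) = 1 := by
      rw [intervalIntegral.integral_sub (by simp) (Continuous.intervalIntegrable (by fun_prop) _ _),
        intervalIntegral.integral_comp_mul_left (fun t => Real.cos t) (by positivity), integral_cos]
      simp
    simp only [stdc]
    rw [intervalIntegral.integral_add (Continuous.intervalIntegrable (by fun_prop) _ _)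
      (Continuous.intervalIntegrable (by fun_prop) _ _), intervalIntegral.integral_smul,
      intervalIntegral.integral_add (Continuous.intervalIntegrable (by fun_prop) _ _)
      (Continuous.intervalIntegrable (by fun_prop) _ _), intervalIntegral.integral_smul_const,
      intervalIntegral.integral_smul_const, intervalIntegral.integral_smul_const, i1, i2, i3]
    simp

lemma std_len {v : E3} (hv : ‖v‖ < 2) {m : ℕ} (hm : 2 ≤ m) {L : ℝ} (hL : 4 * Real.pi * m ≤ L)
    {w n : E3} (hw : ‖w‖ = 1) (hn : ‖n‖ = 1) (hwn : inner ℝ w n = 0) :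
    Real.pi < alen (stdc v m L w n) 1 := by
  have hm' : (2 : ℝ) ≤ m := by exact_mod_cast hm
  have hpi := Real.pi_gt_three
  have hpi4 := Real.pi_lt_four
  have hL16 : 24 ≤ L := by nlinarith
  have hlow : ∀ t, (20:ℝ) ≤ ‖stdc v m L w n t‖ := by
    intro t
    have h1 : ‖Real.cos (2 * Real.pi * m * t) • w + Real.sin (2 * Real.pi * m * t) • n‖ = 1 :=
      unit_comb' hw hn hwn _ _ (Real.cos_sq_add_sin_sq _)
    have h2 : ‖(1 - Real.cos (2 * Real.pi * t)) • v‖ ≤ 4 := by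
      rw [norm_smul, Real.norm_of_nonneg (by linarith [Real.cos_le_one (2 * Real.pi * t)])]
      nlinarith [Real.neg_one_le_cos (2 * Real.pi * t), norm_nonneg v, Real.cos_le_one (2 * Real.pi * t)]
    have h3 := norm_sub_le_norm_add (L • (Real.cos (2 * Real.pi * m * t) • w +
      Real.sin (2 * Real.pi * m * t) • n)) ((1 - Real.cos (2 * Real.pi * t)) • v)
    rw [norm_smul, h1, Real.norm_of_nonneg (by linarith)] at h3
    rw [stdc]
    linarith
  have hc : Continuous (stdc v m L w n) := by unfold stdc; fun_prop
  have := intervalIntegral.integral_mono_on (μ := MeasureTheory.volume) (zero_le_one (α := ℝ))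
    (intervalIntegrable_const (c := (20:ℝ))) (hc.norm.intervalIntegrable 0 1) (fun t _ => hlow t)
  simp only [intervalIntegral.integral_const, sub_zero, one_smul] at this
  exact lt_of_lt_of_le (by linarith) this

instance : Fact (Module.finrank ℝ E3 = 2 + 1) := ⟨by simp [E3]⟩

lemma sphere_path {w : E3} (hw : w ≠ 0) {a b : E3} (ha : ‖a‖ = 1) (hb : ‖b‖ = 1)
    (hwa : inner ℝ w a = 0) (hwb : inner ℝ w b = 0) :
    ∃ f : unitInterval → E3, Continuous f ∧ f 0 = a ∧ f 1 = b ∧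
      ∀ k, ‖f k‖ = 1 ∧ inner ℝ w (f k) = 0 := by
  have hr : Module.finrank ℝ (ℝ ∙ w)ᗮ = 2 := Submodule.finrank_orthogonal_span_singleton hw
  have hr' : 1 < Module.rank ℝ (ℝ ∙ w)ᗮ := by
    rw [← Module.finrank_eq_rank, hr]; norm_num
  have hp := isPathConnected_sphere hr' 0 zero_le_one
  have ha' : (⟨a, Submodule.mem_orthogonal_singleton_iff_inner_right.2 hwa⟩ : (ℝ ∙ w)ᗮ) ∈
      sphere (0 : (ℝ ∙ w)ᗮ) 1 := by simpa using ha
  have hb' : (⟨b, Submodule.mem_orthogonal_singleton_iff_inner_right.2 hwb⟩ : (ℝ ∙ w)ᗮ) ∈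
      sphere (0 : (ℝ ∙ w)ᗮ) 1 := by simpa using hb
  obtain ⟨γ, hγ⟩ := hp.joinedIn _ ha' _ hb'
  refine ⟨fun k => (γ k : E3), continuous_subtype_val.comp γ.continuous, by simp, by simp, fun k => ?_⟩
  refine ⟨?_, Submodule.mem_orthogonal_singleton_iff_inner_right.1 (γ k).2⟩
  simpa using hγ k

lemma exists_orth (w w' : E3) : ∃ e : E3, ‖e‖ = 1 ∧ inner ℝ w e = 0 ∧ inner ℝ w' e = 0 := by
  have hne : (Submodule.span ℝ ({w, w'} : Set E3))ᗮ ≠ ⊥ := by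
    intro h
    rw [Submodule.orthogonal_eq_bot_iff] at h
    have h1 : Module.finrank ℝ (Submodule.span ℝ ((({w, w'} : Finset E3) : Set E3))) ≤ 2 :=
      (finrank_span_finset_le_card _).trans Finset.card_le_two
    rw [Finset.coe_pair, h, finrank_top] at h1
    have : Module.finrank ℝ E3 = 3 := by simp [E3]
    omega
  obtain ⟨e, he, he0⟩ := Submodule.exists_mem_ne_zero_of_ne_bot hne
  rw [Submodule.mem_orthogonal] at he
  refine ⟨‖e‖⁻¹ • e, ?_, ?_, ?_⟩
  · rw [norm_smul, norm_inv, norm_norm]; exact inv_mul_cancel₀ (norm_ne_zero_iff.2 he0)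
  · rw [inner_smul_right, he w (Submodule.subset_span (by simp)), mul_zero]
  · rw [inner_smul_right, he w' (Submodule.subset_span (by simp)), mul_zero]

lemma std_path {x y : E3} (hv : ‖y - x‖ < 2) {m : ℕ} (hm : 2 ≤ m) (L : unitInterval → ℝ)
    (w n : unitInterval → E3) (hLc : Continuous L) (hwc : Continuous w) (hnc : Continuous n)
    (hL : ∀ k, 4 * Real.pi * m ≤ L k)
    (hw : ∀ k, ‖w k‖ = 1) (hn : ∀ k, ‖n k‖ = 1) (hwn : ∀ k, inner ℝ (w k) (n k) = 0) :
    Joined (el x y (adm_std hv hm (hL 0) (hw 0) (hn 0) (hwn 0)))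
      (el x y (adm_std hv hm (hL 1) (hw 1) (hn 1) (hwn 1))) := by
  refine el_joined x y (fun k => stdc (y - x) m (L k) (w k) (n k)) ?_
    (fun k => adm_std hv hm (hL k) (hw k) (hn k) (hwn k))
  unfold stdc Function.uncurry
  fun_prop

lemma std_frame1 {x y : E3} (hv : ‖y - x‖ < 2) {m : ℕ} (hm : 2 ≤ m) {L : ℝ}
    (hL : 4 * Real.pi * m ≤ L) {w n n' : E3} (hw : ‖w‖ = 1) (hn : ‖n‖ = 1) (hn' : ‖n'‖ = 1)
    (hwn : inner ℝ w n = 0) (hwn' : inner ℝ w n' = 0) :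
    Joined (el x y (adm_std hv hm hL hw hn hwn)) (el x y (adm_std hv hm hL hw hn' hwn')) := by
  obtain ⟨f, hf, rfl, rfl, hf2⟩ := sphere_path (norm_ne_zero_iff.1 (by rw [hw]; norm_num)) hn hn' hwn hwn'
  exact std_path hv hm (fun _ => L) (fun _ => w) f continuous_const continuous_const hf
    (fun _ => hL) (fun _ => hw) (fun k => (hf2 k).1) (fun k => (hf2 k).2)

lemma std_frame2 {x y : E3} (hv : ‖y - x‖ < 2) {m : ℕ} (hm : 2 ≤ m) {L : ℝ}
    (hL : 4 * Real.pi * m ≤ L) {w w' n : E3} (hw : ‖w‖ = 1) (hw' : ‖w'‖ = 1) (hn : ‖n‖ = 1)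
    (hwn : inner ℝ w n = 0) (hwn' : inner ℝ w' n = 0) :
    Joined (el x y (adm_std hv hm hL hw hn hwn)) (el x y (adm_std hv hm hL hw' hn hwn')) := by
  obtain ⟨f, hf, rfl, rfl, hf2⟩ := sphere_path (norm_ne_zero_iff.1 (by rw [hn]; norm_num)) hw hw'
    ((real_inner_comm _ _).trans hwn) ((real_inner_comm _ _).trans hwn')
  exact std_path hv hm (fun _ => L) f (fun _ => n) continuous_const hf continuous_const
    (fun _ => hL) (fun k => (hf2 k).1) (fun _ => hn) (fun k => (real_inner_comm _ _).trans (hf2 k).2)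

lemma std_joined {x y : E3} (hv : ‖y - x‖ < 2) {m : ℕ} (hm : 2 ≤ m) {L L' : ℝ}
    (hL : 4 * Real.pi * m ≤ L) (hL' : 4 * Real.pi * m ≤ L') {w n w' n' : E3} (hw : ‖w‖ = 1)
    (hn : ‖n‖ = 1) (hwn : inner ℝ w n = 0) (hw' : ‖w'‖ = 1)
    (hn' : ‖n'‖ = 1) (hwn' : inner ℝ w' n' = 0) :
    Joined (el x y (adm_std hv hm hL hw hn hwn)) (el x y (adm_std hv hm hL' hw' hn' hwn')) := by
  obtain ⟨e, he, h1, h2⟩ := exists_orth w w'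
  have j1 := std_frame1 hv hm hL hw hn he hwn h1
  have j2 := std_frame2 hv hm hL hw hw' he h1 h2
  have j3 := std_frame1 hv hm hL hw' he hn' h2 hwn'
  have j4 := std_path (x := x) (y := y) hv hm (fun k => (1 - (k : ℝ)) * L + k * L') (fun _ => w') (fun _ => n')
    (by fun_prop) continuous_const continuous_const
    (fun k => by
      have := k.2.1
      have : 0 ≤ 1 - (k : ℝ) := by linarith [k.2.2]
      nlinarith [mul_le_mul_of_nonneg_left hL this, mul_le_mul_of_nonneg_left hL' k.2.1])
    (fun _ => hw') (fun _ => hn') (fun _ => hwn')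
  have j5 : Joined (el x y (adm_std hv hm hL hw' hn' hwn')) (el x y (adm_std hv hm hL' hw' hn' hwn')) := by
    convert j4 using 1 <;>
    · apply el_congr; intro t _; simp
  exact ((j1.trans j2).trans j3).trans j5


lemma adm_window {v : E3} {g : ℝ → E3} {α β : ℝ} (hab : 0 < β - α) (hg : Continuous g)
    (hne : ∀ r ∈ Icc α β, g r ≠ 0)
    (hpw : ∃ F : Finset ℝ, ∀ r ∈ Ioo α β, r ∉ F → ∃ d : E3, HasDerivAt g d r ∧ ‖d‖ ≤ ‖g r‖ ^ 2)
    (hint : ∫ r in α..β, g r = v) : Adm v (fun t => (β - α) • g (α + (β - α) * t)) where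
  cont := by fun_prop
  ne := fun t ht => by
    refine smul_ne_zero hab.ne' (hne _ ⟨?_, ?_⟩)
    · nlinarith [ht.1]
    · nlinarith [ht.2]
  pw := by
    obtain ⟨F, hF⟩ := hpw
    refine ⟨F.image (fun r => (r - α) / (β - α)), fun t ht htF => ?_⟩
    obtain ⟨d, hd, hd1⟩ := hF (α + (β - α) * t) ⟨by nlinarith [ht.1], by nlinarith [ht.2]⟩
      (fun hm => htF (Finset.mem_image.2 ⟨_, hm, by field_simp; ring⟩))
    have h1 : HasDerivAt (fun t => α + (β - α) * t) (β - α) t := by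
      simpa using ((hasDerivAt_id t).const_mul (β - α)).const_add α
    refine ⟨_, (HasDerivAt.scomp t hd h1).const_smul (β - α), ?_⟩
    rw [norm_smul, norm_smul, norm_smul, Real.norm_of_nonneg hab.le, mul_pow]
    nlinarith [mul_pos hab hab]
  int := by
    rw [intervalIntegral.integral_smul,
      intervalIntegral.integral_comp_add_mul (fun t => g t) hab.ne', smul_smul,
      mul_inv_cancel₀ hab.ne', one_smul, mul_zero, mul_one, add_zero,
      show α + (β - α) = β by ring, hint]

def rot (w n : E3) (φ : ℝ) : E3 →L[ℝ] E3 :=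
  ContinuousLinearMap.id ℝ E3 +
    (innerSL ℝ w).smulRight ((Real.cos φ - 1) • w + Real.sin φ • n) +
    (innerSL ℝ n).smulRight ((-Real.sin φ) • w + (Real.cos φ - 1) • n)

lemma rot_apply (w n : E3) (φ : ℝ) (z : E3) : rot w n φ z =
    z + inner ℝ w z • ((Real.cos φ - 1) • w + Real.sin φ • n) +
      inner ℝ n z • ((-Real.sin φ) • w + (Real.cos φ - 1) • n) := by
  simp [rot]

lemma rot_norm {w n : E3} (hw : ‖w‖ = 1) (hn : ‖n‖ = 1) (hwn : inner ℝ w n = 0) (φ : ℝ) (z : E3) :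
    ‖rot w n φ z‖ = ‖z‖ := by
  set α := inner ℝ w z with hα
  set β := inner ℝ n z with hβ
  set z' := z - α • w - β • n with hz'
  have hww : inner ℝ w w = (1:ℝ) := by rw [real_inner_self_eq_norm_sq, hw]; norm_num
  have hnn : inner ℝ n n = (1:ℝ) := by rw [real_inner_self_eq_norm_sq, hn]; norm_num
  have hnw : inner ℝ n w = (0:ℝ) := by rw [real_inner_comm]; exact hwn
  have o1 : inner ℝ w z' = (0:ℝ) := by
    rw [hz', inner_sub_right, inner_sub_right, inner_smul_right, inner_smul_right, hww, hwn, ← hα]; ring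
  have o2 : inner ℝ n z' = (0:ℝ) := by
    rw [hz', inner_sub_right, inner_sub_right, inner_smul_right, inner_smul_right, hnw, hnn, ← hβ]; ring
  have key : ∀ p q : ℝ, ‖z' + (p • w + q • n)‖ ^ 2 = ‖z'‖ ^ 2 + (p ^ 2 + q ^ 2) := by
    intro p q
    rw [norm_add_sq_real, unit_comb hw hn hwn, inner_add_right, inner_smul_right, inner_smul_right,
      real_inner_comm, o1, real_inner_comm, o2]; ring
  have e1 : rot w n φ z = z' + ((α * Real.cos φ - β * Real.sin φ) • w +
      (α * Real.sin φ + β * Real.cos φ) • n) := by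
    rw [rot_apply, ← hα, ← hβ, hz']; module
  have e2 : z = z' + (α • w + β • n) := by rw [hz']; module
  refine (pow_left_inj₀ (norm_nonneg _) (norm_nonneg _) two_ne_zero).1 ?_
  rw [e1, key]
  conv_rhs => rw [e2, key]
  have := Real.sin_sq_add_cos_sq φ
  have e3 : (α * Real.cos φ - β * Real.sin φ) ^ 2 + (α * Real.sin φ + β * Real.cos φ) ^ 2 =
    (α ^ 2 + β ^ 2) * (Real.sin φ ^ 2 + Real.cos φ ^ 2) := by ring
  rw [e3, this, mul_one]

structure Cfg (s : ℝ) (u : ℝ → E3) (c R : ℝ) (w n : E3) : Prop where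
  tan : Tan s u
  hc : c ∈ Ioo 0 s
  hR : 2 ≤ R
  hw : ‖w‖ = 1
  hn : ‖n‖ = 1
  hwn : inner ℝ w n = (0:ℝ)
  huc : u c = w
  hint : ∫ t in (0:ℝ)..c, u t = -(R • n)

def kf (R : ℝ) (m : ℕ) (r : ℝ) : ℝ := (1 - Real.cos (r / (m * R))) / (2 * Real.pi * m * R)

def mid (R : ℝ) (m : ℕ) (w n D : E3) (r : ℝ) : E3 :=
  Real.cos (r / R) • w + Real.sin (r / R) • n + kf R m r • D

def GG (u : ℝ → E3) (c R : ℝ) (m : ℕ) (w n : E3) (φ : ℝ) (D : E3) (r : ℝ) : E3 :=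
  if r ≤ -(φ * R) then rot w n (-φ) (u (c + r + φ * R)) else
  if r ≤ 0 then mid R m w n D r else u (c + r)

section cfg
variable {s : ℝ} {u : ℝ → E3} {c R : ℝ} {w n : E3} {m : ℕ}

lemma rot_w (hw : ‖w‖ = 1) (hwn : inner ℝ w n = (0:ℝ)) (φ : ℝ) :
    rot w n φ w = Real.cos φ • w + Real.sin φ • n := by
  have hww : inner ℝ w w = (1:ℝ) := by rw [real_inner_self_eq_norm_sq, hw]; norm_num
  have hnw : inner ℝ n w = (0:ℝ) := by rw [real_inner_comm]; exact hwn
  rw [rot_apply, hww, hnw]; module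

lemma rot_n (hn : ‖n‖ = 1) (hwn : inner ℝ w n = (0:ℝ)) (φ : ℝ) :
    rot w n φ n = (-Real.sin φ) • w + Real.cos φ • n := by
  have hnn : inner ℝ n n = (1:ℝ) := by rw [real_inner_self_eq_norm_sq, hn]; norm_num
  rw [rot_apply, hnn, hwn]; module

lemma GG_cont (C : Cfg s u c R w n) {K : Type*} [TopologicalSpace K] (φ ρ : K → ℝ) (D : K → E3)
    (hφ : Continuous φ) (hρ : Continuous ρ) (hD : Continuous D) (h0 : ∀ k, 0 ≤ φ k)
    (hk : ∀ k, kf R m (-(φ k * R)) • D k = 0) :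
    Continuous (fun k => GG u c R m w n (φ k) (D k) (ρ k)) := by
  have hu := C.tan.cont
  have hR := C.hR
  have hR0 : R ≠ 0 := by positivity
  have c0 : Continuous (fun k => mid R m w n (D k) (ρ k)) := by
    unfold mid kf; fun_prop
  refine Continuous.if_le ?_ ?_ hρ (by fun_prop) ?_
  · simp only [rot_apply]; fun_prop
  · refine Continuous.if_le c0 (by fun_prop) hρ continuous_const ?_
    intro k hk0
    rw [hk0, mid, kf]; simp [C.huc]
  · intro k hk1
    have : (if ρ k ≤ 0 then mid R m w n (D k) (ρ k) else u (c + ρ k)) = mid R m w n (D k) (ρ k) := by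
      rw [if_pos]; rw [hk1]; have := h0 k; nlinarith [mul_nonneg this (by linarith : (0:ℝ) ≤ R)]
    rw [this, hk1, mid, hk k, add_zero, show c + -(φ k * R) + φ k * R = c by ring, C.huc,
      rot_w C.hw C.hwn, neg_div, mul_div_cancel_right₀ _ hR0]

lemma GG_mid (C : Cfg s u c R w n) {φ r : ℝ} {D : E3} (hk : kf R m (-(φ * R)) • D = 0)
    (h1 : -(φ * R) ≤ r) (h2 : r ≤ 0) : GG u c R m w n φ D r = mid R m w n D r := by
  have hR := C.hR
  have hR0 : R ≠ 0 := by positivity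
  unfold GG
  rcases h1.eq_or_lt with h | h
  · rw [if_pos h.ge, ← h, mid, hk, add_zero, show c + -(φ * R) + φ * R = c by ring, C.huc,
      rot_w C.hw C.hwn, neg_div, mul_div_cancel_right₀ _ hR0]
  · rw [if_neg (not_le.2 h), if_pos h2]

lemma GG_right (C : Cfg s u c R w n) {φ r : ℝ} {D : E3} (h0 : 0 ≤ φ)
    (hk : kf R m (-(φ * R)) • D = 0) (h1 : 0 ≤ r) :
    GG u c R m w n φ D r = u (c + r) := by
  have hR := C.hR
  have : 0 ≤ φ * R := by positivity
  rcases h1.eq_or_lt with h | h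
  · rw [GG_mid C hk (by linarith) h.ge, ← h, mid, kf]; simp [C.huc]
  · unfold GG
    rw [if_neg (by linarith), if_neg (by linarith)]

lemma GG_left {φ r : ℝ} {D : E3} (h : r ≤ -(φ * R)) :
    GG u c R m w n φ D r = rot w n (-φ) (u (c + r + φ * R)) := by
  unfold GG; rw [if_pos h]

lemma kf_bound (hR : 2 ≤ R) (hm : 2 ≤ m) {D : E3} (hD : 2 * ‖D‖ ≤ m) (r : ℝ) :
    ‖kf R m r • D‖ ≤ 1 / 12 := by
  have hm' : (2 : ℝ) ≤ m := by exact_mod_cast hm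
  have hpi := Real.pi_gt_three
  have h1 : |kf R m r| ≤ 2 / (2 * Real.pi * m * R) := by
    rw [kf, abs_div, abs_of_pos (a := 2 * Real.pi * m * R) (by positivity)]
    gcongr
    rw [abs_le]; constructor <;> linarith [Real.neg_one_le_cos (r / (m * R)), Real.cos_le_one (r / (m * R))]
  rw [norm_smul, Real.norm_eq_abs]
  calc |kf R m r| * ‖D‖ ≤ 2 / (2 * Real.pi * m * R) * (m / 2) := by gcongr; linarith
    _ = 1 / (2 * (Real.pi * R)) := by field_simp
    _ ≤ 1 / (12) := by gcongr; nlinarith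

lemma mid_deriv (C : Cfg s u c R w n) (hm : 2 ≤ m) {D : E3} (hD : 2 * ‖D‖ ≤ m) (r : ℝ) :
    mid R m w n D r ≠ 0 ∧ ∃ d, HasDerivAt (mid R m w n D) d r ∧ ‖d‖ ≤ ‖mid R m w n D r‖ ^ 2 := by
  have hm' : (2 : ℝ) ≤ m := by exact_mod_cast hm
  have hpi := Real.pi_gt_three
  have hR := C.hR
  have h1 : ‖Real.cos (r / R) • w + Real.sin (r / R) • n‖ = 1 :=
    unit_comb' C.hw C.hn C.hwn _ _ (Real.cos_sq_add_sin_sq _)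
  have h2 := kf_bound hR hm hD r
  have h3 := norm_sub_le_norm_add (Real.cos (r / R) • w + Real.sin (r / R) • n) (kf R m r • D)
  have h4 : 11 / 12 ≤ ‖mid R m w n D r‖ := by rw [mid]; linarith
  refine ⟨by rw [← norm_pos_iff]; linarith, ?_⟩
  have a1 : HasDerivAt (fun r : ℝ => r / R) (1 / R) r := (hasDerivAt_id r).div_const R
  have a2 : HasDerivAt (fun r : ℝ => r / (m * R)) (1 / (m * R)) r := (hasDerivAt_id r).div_const _
  have a3 := ((a1.cos.smul_const w).add (a1.sin.smul_const n)).add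
    (((a2.cos.const_sub 1).div_const (2 * Real.pi * m * R)).smul_const D)
  refine ⟨_, a3, ?_⟩
  have h5 : ‖(-Real.sin (r / R)) • w + Real.cos (r / R) • n‖ = 1 :=
    unit_comb' C.hw C.hn C.hwn _ _ (by rw [neg_sq]; exact Real.sin_sq_add_cos_sq _)
  have e1 : (-Real.sin (r / R) * (1 / R)) • w + (Real.cos (r / R) * (1 / R)) • n =
      (1 / R) • ((-Real.sin (r / R)) • w + Real.cos (r / R) • n) := by module
  refine (norm_add_le _ _).trans ?_
  rw [e1, norm_smul, norm_smul, h5]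
  have h6 : ‖(1 / R : ℝ)‖ ≤ 1 / 2 := by
    rw [Real.norm_of_nonneg (by positivity)]; gcongr
  have h7 : ‖-(-Real.sin (r / (m * R)) * (1 / (m * R))) / (2 * Real.pi * m * R)‖ ≤
      1 * (1 / (m * R)) / (2 * Real.pi * m * R) := by
    rw [norm_div, norm_neg, norm_mul, norm_neg, Real.norm_of_nonneg (r := 2 * Real.pi * m * R) (by positivity),
      Real.norm_of_nonneg (r := 1 / (m * R)) (by positivity), Real.norm_eq_abs]
    gcongr
    exact Real.abs_sin_le_one _
  have h8 : ‖-(-Real.sin (r / (m * R)) * (1 / (m * R))) / (2 * Real.pi * m * R)‖ * ‖D‖ ≤ 1 / 12 := by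
    calc _ ≤ 1 * (1 / (m * R)) / (2 * Real.pi * m * R) * (m / 2) := by gcongr; linarith
      _ = 1 / (4 * (Real.pi * (m * (R * R)))) := by field_simp; ring
      _ ≤ 1 / 12 := by
        have : 3 * (2 * (2 * 2)) ≤ Real.pi * (m * (R * R)) := by gcongr
        gcongr; linarith
  have h9 : (11 / 12) ^ 2 ≤ ‖mid R m w n D r‖ ^ 2 := by gcongr
  norm_num at h9
  linarith

lemma GG_adm (C : Cfg s u c R w n) (hm : 2 ≤ m) {D : E3} (hD : 2 * ‖D‖ ≤ m) {φ a b : ℝ}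
    (hφ : 0 ≤ φ) (hk : kf R m (-(φ * R)) • D = 0) (ha0 : 0 ≤ a) (hac : a ≤ c) (hb0 : 0 ≤ b)
    (hbc : b ≤ s - c) (hpos : 0 < b - -(a + φ * R)) {v : E3}
    (hint : ∫ r in (-(a + φ * R))..b, GG u c R m w n φ D r = v) :
    Adm v (fun t => (b - -(a + φ * R)) •
      GG u c R m w n φ D (-(a + φ * R) + (b - -(a + φ * R)) * t)) := by
  have hR := C.hR
  have hφR : 0 ≤ φ * R := by positivity
  have hcont : Continuous (GG u c R m w n φ D) :=
    GG_cont C (fun _ => φ) id (fun _ => D) continuous_const continuous_id continuous_const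
      (fun _ => hφ) (fun _ => hk)
  obtain ⟨F, hF⟩ := C.tan.pw
  refine adm_window hpos hcont ?_ ⟨{-(φ * R), 0} ∪ F.image (fun t => t - c - φ * R) ∪
    F.image (fun t => t - c), ?_⟩ hint
  · intro r _
    rcases le_total r (-(φ * R)) with h | h
    · rw [GG_left h, ← norm_ne_zero_iff, rot_norm C.hw C.hn C.hwn, C.tan.unit]; norm_num
    rcases le_total r 0 with h' | h'
    · rw [GG_mid C hk h h']; exact (mid_deriv C hm hD r).1
    · rw [GG_right C hφ hk h', ← norm_ne_zero_iff, C.tan.unit]; norm_num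
  · intro r hr hrF
    simp only [Finset.mem_union, Finset.mem_image, Finset.mem_insert, Finset.mem_singleton,
      not_or, not_exists, not_and] at hrF
    obtain ⟨⟨⟨f1, f2⟩, f3⟩, f4⟩ := hrF
    rcases lt_or_gt_of_ne f1 with h | h
    · obtain ⟨d, hd, hd1⟩ := hF (c + r + φ * R) ⟨by linarith [hr.1], by linarith [C.hc.2]⟩
        (fun hm => f3 _ hm (by ring))
      have h1 : HasDerivAt (fun r => c + r + φ * R) 1 r :=
        ((hasDerivAt_id r).const_add c).add_const _
      have h2 := (rot w n (-φ)).hasFDerivAt.comp_hasDerivAt r (HasDerivAt.scomp r hd h1)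
      refine ⟨_, h2.congr_of_eventuallyEq ?_, ?_⟩
      · filter_upwards [Iio_mem_nhds h] with z hz
        exact GG_left hz.le
      · rw [GG_left h.le, rot_norm C.hw C.hn C.hwn, rot_norm C.hw C.hn C.hwn, C.tan.unit]
        simpa using hd1
    rcases lt_or_gt_of_ne f2 with h' | h'
    · obtain ⟨d, hd, hd1⟩ := (mid_deriv C hm hD r).2
      refine ⟨d, hd.congr_of_eventuallyEq ?_, ?_⟩
      · filter_upwards [Ioo_mem_nhds h h'] with z hz
        exact GG_mid C hk hz.1.le hz.2.le
      · rw [GG_mid C hk h.le h'.le]; exact hd1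
    · obtain ⟨d, hd, hd1⟩ := hF (c + r) ⟨by linarith [C.hc.1], by linarith [hr.2]⟩
        (fun hm => f4 _ hm (by ring))
      have h1 : HasDerivAt (fun r => c + r) 1 r := (hasDerivAt_id r).const_add c
      refine ⟨_, (HasDerivAt.scomp r hd h1).congr_of_eventuallyEq ?_, ?_⟩
      · filter_upwards [Ioi_mem_nhds h'] with z hz
        exact GG_right C hφ hk (le_of_lt hz)
      · rw [GG_right C hφ hk h'.le, C.tan.unit]
        simpa using hd1

lemma GG_int (C : Cfg s u c R w n) (hm : 2 ≤ m) {D : E3} {φ a b : ℝ}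
    (hφ : 0 ≤ φ) (hk : kf R m (-(φ * R)) • D = 0) (ha0 : 0 ≤ a) (hb0 : 0 ≤ b) :
    ∫ r in (-(a + φ * R))..b, GG u c R m w n φ D r =
      rot w n (-φ) (∫ t in (c - a)..c, u t) + ((R * Real.sin φ) • w + (R * (Real.cos φ - 1)) • n
        + (∫ r in (-(φ * R))..0, kf R m r) • D) + ∫ t in c..(c + b), u t := by
  have hR := C.hR
  have hR0 : R ≠ 0 := by positivity
  have hφR : 0 ≤ φ * R := by positivity
  have hcont : Continuous (GG u c R m w n φ D) :=
    GG_cont C (fun _ => φ) id (fun _ => D) continuous_const continuous_id continuous_const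
      (fun _ => hφ) (fun _ => hk)
  have hi : ∀ p q, IntervalIntegrable (GG u c R m w n φ D) MeasureTheory.volume p q :=
    fun p q => hcont.intervalIntegrable p q
  rw [← intervalIntegral.integral_add_adjacent_intervals (hi (-(a + φ * R)) 0) (hi 0 b),
    ← intervalIntegral.integral_add_adjacent_intervals (hi (-(a + φ * R)) (-(φ * R))) (hi _ 0)]
  congr 1
  · congr 1
    · rw [← ContinuousLinearMap.intervalIntegral_comp_comm _ (C.tan.cont.intervalIntegrable _ _)]
      have : ∫ r in (-(a + φ * R))..(-(φ * R)), GG u c R m w n φ D r =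
          ∫ r in (-(a + φ * R))..(-(φ * R)), (fun t => rot w n (-φ) (u t)) ((c + φ * R) + r) := by
        refine intervalIntegral.integral_congr (fun r hr => ?_)
        rw [uIcc_of_le (by linarith)] at hr
        simp only [GG_left hr.2]
        congr 2; ring
      rw [this, intervalIntegral.integral_comp_add_left (fun t => rot w n (-φ) (u t))]
      congr 1 <;> ring
    · have : ∫ r in (-(φ * R))..0, GG u c R m w n φ D r = ∫ r in (-(φ * R))..0, mid R m w n D r := by
        refine intervalIntegral.integral_congr (fun r hr => ?_)
        rw [uIcc_of_le (by linarith)] at hr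
        exact GG_mid C hk hr.1 hr.2
      rw [this]
      unfold mid
      have ck : Continuous (kf R m) := by unfold kf; fun_prop
      rw [intervalIntegral.integral_add (Continuous.intervalIntegrable (by fun_prop) _ _)
        (Continuous.intervalIntegrable (by fun_prop) _ _),
        intervalIntegral.integral_add (Continuous.intervalIntegrable (by fun_prop) _ _)
        (Continuous.intervalIntegrable (by fun_prop) _ _), intervalIntegral.integral_smul_const,
        intervalIntegral.integral_smul_const, intervalIntegral.integral_smul_const,
        intervalIntegral.integral_comp_div (fun t => Real.cos t) hR0,
        intervalIntegral.integral_comp_div (fun t => Real.sin t) hR0, integral_cos, integral_sin,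
        neg_div, mul_div_cancel_right₀ _ hR0]
      simp
  · have : ∫ r in (0:ℝ)..b, GG u c R m w n φ D r = ∫ r in (0:ℝ)..b, u (c + r) := by
      refine intervalIntegral.integral_congr (fun r hr => ?_)
      rw [uIcc_of_le hb0] at hr
      exact GG_right C hφ hk hr.1
    rw [this, intervalIntegral.integral_comp_add_left (fun t => u t), add_zero]

end cfg


lemma two_le_pi {s : ℝ} {u : ℝ → E3} (h : Tan s u) : 2 ≤ ‖∫ t in (0:ℝ)..Real.pi, u t‖ := by
  have hpi := Real.pi_pos
  have := inner_integral_ge h 0 Real.pi (Real.pi / 2) (by linarith) (by linarith) (by linarith)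
  rw [sub_zero, show Real.pi - Real.pi / 2 = Real.pi / 2 by ring, Real.sin_pi_div_two] at this
  have h2 := real_inner_le_norm (∫ t in (0:ℝ)..Real.pi, u t) (u (Real.pi / 2))
  rw [h.unit, mul_one] at h2
  linarith

lemma cfg_exists {s : ℝ} {u : ℝ → E3} (h : Tan s u) (hs : Real.pi < s)
    (hv : ‖∫ t in (0:ℝ)..s, u t‖ < 2) : ∃ c R w n, Cfg s u c R w n := by
  have hpi := Real.pi_pos
  have hU : ∀ t, HasDerivAt (fun t => ∫ r in (0:ℝ)..t, u r) (u t) t := fun t =>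
    intervalIntegral.integral_hasDerivAt_right (h.cont.intervalIntegrable _ _)
    (h.cont.stronglyMeasurableAtFilter _ _) h.cont.continuousAt
  have hN : ∀ t, HasDerivAt (fun t => ‖∫ r in (0:ℝ)..t, u r‖ ^ 2)
      (2 * inner ℝ (∫ r in (0:ℝ)..t, u r) (u t)) t := fun t => (hU t).norm_sq
  have hNc : Continuous (fun t => ‖∫ r in (0:ℝ)..t, u r‖ ^ 2) :=
    continuous_iff_continuousAt.2 fun t => (hN t).continuousAt
  obtain ⟨c, hc, hmax⟩ := isCompact_Icc.exists_isMaxOn (nonempty_Icc.2 h.pos.le)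
    (hNc.continuousOn (s := Icc 0 s))
  have hcpi : ‖∫ r in (0:ℝ)..Real.pi, u r‖ ^ 2 ≤ ‖∫ r in (0:ℝ)..c, u r‖ ^ 2 :=
    hmax ⟨hpi.le, hs.le⟩
  have h2 := two_le_pi h
  have hR : 2 ≤ ‖∫ r in (0:ℝ)..c, u r‖ := by
    refine h2.trans ?_
    exact (pow_le_pow_iff_left₀ (norm_nonneg _) (norm_nonneg _) two_ne_zero).1 hcpi
  have hc' : c ∈ Ioo 0 s := by
    refine ⟨lt_of_le_of_ne hc.1 ?_, lt_of_le_of_ne hc.2 ?_⟩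
    · rintro rfl
      simp at hR
      linarith
    · rintro rfl; linarith
  have hz := (hmax.isLocalMax (Icc_mem_nhds hc'.1 hc'.2)).hasDerivAt_eq_zero (hN c)
  set R := ‖∫ r in (0:ℝ)..c, u r‖ with hRd
  have hRn : R ≠ 0 := by positivity
  refine ⟨c, R, u c, -(R⁻¹ • ∫ r in (0:ℝ)..c, u r), h, hc', hR, h.unit c, ?_, ?_, rfl, ?_⟩
  · rw [norm_neg, norm_smul, norm_inv, hRd, norm_norm, ← hRd, inv_mul_cancel₀ hRn]
  · rw [inner_neg_right, inner_smul_right, real_inner_comm]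
    have : inner ℝ (∫ r in (0:ℝ)..c, u r) (u c) = (0:ℝ) := by linarith
    rw [this]; simp
  · rw [smul_neg, neg_neg, smul_smul, mul_inv_cancel₀ hRn, one_smul]

section cfg
variable {s : ℝ} {u : ℝ → E3} {c R : ℝ} {w n : E3} {m : ℕ}

def PG (u : ℝ → E3) (c R : ℝ) (m : ℕ) (w n : E3) (φ : ℝ) (D : E3) (a b t : ℝ) : E3 :=
  (b - -(a + φ * R)) • GG u c R m w n φ D (-(a + φ * R) + (b - -(a + φ * R)) * t)

lemma stage {x y : E3} (C : Cfg s u c R w n) (hm : 2 ≤ m) (φ a b : unitInterval → ℝ)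
    (D : unitInterval → E3)
    (cφ : Continuous φ) (ca : Continuous a) (cb : Continuous b) (cD : Continuous D)
    (hD : ∀ k, 2 * ‖D k‖ ≤ m) (hφ : ∀ k, 0 ≤ φ k) (hk : ∀ k, kf R m (-(φ k * R)) • D k = 0)
    (ha0 : ∀ k, 0 ≤ a k) (hac : ∀ k, a k ≤ c) (hb0 : ∀ k, 0 ≤ b k)
    (hbc : ∀ k, b k ≤ s - c) (hpos : ∀ k, 0 < b k - -(a k + φ k * R))
    (hint : ∀ k, ∫ r in (-(a k + φ k * R))..b k, GG u c R m w n (φ k) (D k) r = y - x) :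
    ∃ h : ∀ k, Adm (y - x) (PG u c R m w n (φ k) (D k) (a k) (b k)),
      Joined (el x y (h 0)) (el x y (h 1)) := by
  have h : ∀ k, Adm (y - x) (PG u c R m w n (φ k) (D k) (a k) (b k)) := fun k =>
    GG_adm C hm (hD k) (hφ k) (hk k) (ha0 k) (hac k) (hb0 k) (hbc k) (hpos k) (hint k)
  refine ⟨h, el_joined x y (fun k => PG u c R m w n (φ k) (D k) (a k) (b k)) ?_ h⟩
  unfold PG Function.uncurry
  refine Continuous.smul (f := fun z : unitInterval × ℝ => b z.1 - -(a z.1 + φ z.1 * R))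
    (g := fun z : unitInterval × ℝ => GG u c R m w n (φ z.1) (D z.1)
      (-(a z.1 + φ z.1 * R) + (b z.1 - -(a z.1 + φ z.1 * R)) * z.2)) (by fun_prop) ?_
  exact GG_cont C (K := unitInterval × ℝ) (fun z => φ z.1)
    (fun z => -(a z.1 + φ z.1 * R) + (b z.1 - -(a z.1 + φ z.1 * R)) * z.2) (fun z => D z.1)
    (by fun_prop) (by fun_prop) (by fun_prop) (fun z => hφ z.1) (fun z => hk z.1)

lemma cos_pm (m : ℕ) : Real.cos (2 * Real.pi * m) = 1 := by
  rw [mul_comm]; exact Real.cos_nat_mul_two_pi m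

lemma sin_pm (m : ℕ) : Real.sin (2 * Real.pi * m) = 0 := by
  have := Real.sin_nat_mul_pi (2 * m)
  push_cast at this
  rw [← this]; ring_nf

lemma kf_end (hR : 2 ≤ R) (hm : 2 ≤ m) : kf R m (-(2 * Real.pi * m * R)) = 0 := by
  have hm' : (2 : ℝ) ≤ m := by exact_mod_cast hm
  rw [kf, show -(2 * Real.pi * m * R) / (m * R) = -(2 * Real.pi) by field_simp, Real.cos_neg,
    Real.cos_two_pi]; simp

lemma kf_int (hR : 2 ≤ R) (hm : 2 ≤ m) : ∫ r in (-(2 * Real.pi * m * R))..0, kf R m r = 1 := by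
  have hm' : (2 : ℝ) ≤ m := by exact_mod_cast hm
  have hpi := Real.pi_pos
  unfold kf
  rw [intervalIntegral.integral_div, intervalIntegral.integral_sub (by simp)
    (Continuous.intervalIntegrable (by fun_prop) _ _),
    intervalIntegral.integral_comp_div (fun t => Real.cos t) (by positivity), integral_cos,
    show -(2 * Real.pi * m * R) / (m * R) = -(2 * Real.pi) by field_simp]
  simp
  exact ⟨by omega, by positivity⟩

lemma stage1 {x y : E3} (C : Cfg s u c R w n) (hm : 2 ≤ m)
    (hv : ∫ t in (0:ℝ)..s, u t = y - x) :
    ∃ h : Adm (y - x) (PG u c R m w n (2 * Real.pi * m) 0 c (s - c)),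
      Joined (el x y (adm_tan C.tan _ hv)) (el x y h) := by
  have hR := C.hR
  have hpi := Real.pi_pos
  have hu := C.tan.cont
  have hc := C.hc
  have hφ : ∀ k : unitInterval, 0 ≤ 2 * Real.pi * m * k := fun k => by
    have := k.2.1; positivity
  obtain ⟨h, hj⟩ := stage (x := x) (y := y) C hm (fun k => 2 * Real.pi * m * k) (fun _ => c)
    (fun _ => s - c) (fun _ => 0)
    (by fun_prop) continuous_const continuous_const continuous_const
    (by simp) hφ (by simp) (fun _ => hc.1.le) (fun _ => le_rfl) (fun _ => by linarith [hc.2])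
    (fun _ => le_rfl) (fun k => by
      have : 0 ≤ 2 * Real.pi * m * k * R := mul_nonneg (hφ k) (by linarith)
      linarith [C.tan.pos]) (fun k => by
      rw [GG_int C hm (hφ k) (by simp) hc.1.le (by linarith [hc.2]), sub_self, C.hint, map_neg,
        map_smul, rot_n C.hn C.hwn, ← hv, ← intervalIntegral.integral_add_adjacent_intervals
          (hu.intervalIntegrable 0 c) (hu.intervalIntegrable c s), C.hint,
          show c + (s - c) = s by ring, Real.sin_neg, Real.cos_neg]
      module)
  have h1 : Adm (y - x) (PG u c R m w n (2 * Real.pi * m) 0 c (s - c)) := by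
    have := h 1
    simpa using this
  refine ⟨h1, ?_⟩
  convert hj using 1
  · apply el_congr
    intro t _
    unfold PG
    simp only [Set.Icc.coe_zero, mul_zero, zero_mul, add_zero, sub_neg_eq_add, sub_add_cancel]
    congr 1
    rcases le_total (-c + s * t) 0 with h' | h'
    · rw [GG_left (by simpa using h'), rot_apply]
      simp
    · rw [GG_right C le_rfl (by simp) h']
      congr 1; ring
  · apply el_congr
    intro t _
    simp

lemma stage2 {x y : E3} (C : Cfg s u c R w n) (hm : 2 ≤ m) (hms : 2 * s ≤ m)
    (hv2 : ‖y - x‖ < 2)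
    (hv : ∫ t in (0:ℝ)..s, u t = y - x) (h : Adm (y - x) (PG u c R m w n (2 * Real.pi * m) 0 c (s - c)))
    (h' : Adm (y - x) (stdc (y - x) m (2 * Real.pi * m * R) w n)) :
    Joined (el x y h) (el x y h') := by
  have hR := C.hR
  have hpi := Real.pi_pos
  have hu := C.tan.cont
  have hc := C.hc
  have hm' : (2 : ℝ) ≤ m := by exact_mod_cast hm
  have hL : 0 < 2 * Real.pi * m * R := by positivity
  have hUc : Continuous (fun t => ∫ r in (0:ℝ)..t, u r) :=
    intervalIntegral.continuous_primitive (fun a b => hu.intervalIntegrable a b) 0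
  have hUn : ∀ a b, a ≤ b → ‖∫ r in a..b, u r‖ ≤ b - a := by
    intro a b hab
    have := intervalIntegral.norm_integral_le_of_norm_le_const (f := u) (a := a) (b := b) (C := 1)
      (fun t _ => (C.tan.unit t).le)
    rwa [one_mul, abs_of_nonneg (by linarith)] at this
  obtain ⟨D, hDd⟩ : ∃ D : unitInterval → E3, D = fun k : unitInterval => (y - x) -
    ((∫ r in (0:ℝ)..(c + (1 - (k:ℝ)) * (s - c)), u r) - ∫ r in (0:ℝ)..(k * c), u r) := ⟨_, rfl⟩
  have hDc : Continuous D := by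
    rw [hDd]
    exact continuous_const.sub ((hUc.comp (f := fun k : unitInterval => c + (1 - (k:ℝ)) * (s - c))
      (by fun_prop)).sub (hUc.comp (f := fun k : unitInterval => k * c) (by fun_prop)))
  have hii : ∀ a b, IntervalIntegrable u MeasureTheory.volume a b := fun a b => hu.intervalIntegrable a b
  have hDn : ∀ k, ‖D k‖ ≤ s := by
    intro k
    have k0 := k.2.1
    have k1 := k.2.2
    have e : D k = (∫ r in (c + (1 - (k:ℝ)) * (s - c))..s, u r) + ∫ r in (0:ℝ)..(k * c), u r := by
      rw [hDd, ← hv, ← intervalIntegral.integral_add_adjacent_intervals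
        (hii 0 (c + (1 - (k:ℝ)) * (s - c))) (hii _ s)]
      abel
    rw [e]
    refine (norm_add_le _ _).trans ?_
    have n1 := hUn (c + (1 - (k:ℝ)) * (s - c)) s (by nlinarith [hc.2])
    have n2 := hUn 0 (k * c) (mul_nonneg k0 hc.1.le)
    nlinarith [hc.1, hc.2]
  have hDk : ∀ k, D k = (y - x) - ((∫ r in (k * c : ℝ)..c, u r) +
      ∫ r in c..(c + (1 - (k:ℝ)) * (s - c)), u r) := by
    intro k
    rw [hDd, intervalIntegral.integral_add_adjacent_intervals (hii _ _) (hii _ _)]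
    simp only
    rw [intervalIntegral.integral_interval_sub_left (hii _ _) (hii _ _)]
  obtain ⟨H, hj⟩ := stage (x := x) (y := y) C hm (fun k => 2 * Real.pi * m)
    (fun k => (1 - (k:ℝ)) * c) (fun k => (1 - (k:ℝ)) * (s - c)) D
    continuous_const (by fun_prop) (by fun_prop) hDc
    (fun k => by linarith [hDn k]) (fun k => by positivity)
    (fun k => by rw [kf_end hR hm, zero_smul])
    (fun k => mul_nonneg (by linarith [k.2.2]) hc.1.le)
    (fun k => by nlinarith [k.2.1, hc.1])
    (fun k => mul_nonneg (by linarith [k.2.2]) (by linarith [hc.2]))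
    (fun k => by nlinarith [k.2.1, hc.2])
    (fun k => by
      have g1 : 0 ≤ (1 - (k:ℝ)) * c := mul_nonneg (by linarith [k.2.2]) hc.1.le
      have g2 : 0 ≤ (1 - (k:ℝ)) * (s - c) := mul_nonneg (by linarith [k.2.2]) (by linarith [hc.2])
      linarith)
    (fun k => by
      rw [GG_int C hm (by positivity) (by rw [kf_end hR hm, zero_smul])
        (mul_nonneg (by linarith [k.2.2]) hc.1.le)
        (mul_nonneg (by linarith [k.2.2]) (by linarith [hc.2])), kf_int hR hm, cos_pm, sin_pm,
        rot_apply, Real.cos_neg, Real.sin_neg, cos_pm, sin_pm, hDk,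
        show c - (1 - (k:ℝ)) * c = k * c by ring]
      simp
      abel)
  convert hj using 1
  · apply el_congr
    intro t _
    have : D 0 = 0 := by
      rw [hDd]; simp [hv]
    simp only [this, Set.Icc.coe_zero, sub_zero, one_mul]
  · apply el_congr
    intro t ht
    have hD1 : D 1 = y - x := by
      rw [hDd]; simp
    simp only [hD1, Set.Icc.coe_one, sub_self, zero_mul]
    unfold PG
    simp only [zero_add, zero_sub, neg_neg]
    rw [GG_mid C (by rw [kf_end hR hm, zero_smul]) (by nlinarith [ht.1]) (by nlinarith [ht.2]), stdc, mid, kf,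
      show (-(2 * Real.pi * m * R) + 2 * Real.pi * m * R * t) / R = 2 * Real.pi * m * t - m * (2 * Real.pi) by
        field_simp; ring,
      show (-(2 * Real.pi * m * R) + 2 * Real.pi * m * R * t) / (m * R) = 2 * Real.pi * t - 2 * Real.pi by
        field_simp; ring,
      Real.cos_sub_nat_mul_two_pi, Real.sin_sub_nat_mul_two_pi, Real.cos_sub_two_pi, smul_add _ _ (_ • (y - x)),
      smul_smul _ _ (y - x), mul_div_cancel₀ _ hL.ne']

end cfg

lemma long_joined {x y : E3} (hv : ‖y - x‖ < 2) (q : SigmaSpace x y) (hs : Real.pi < q.1.1)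
    {m : ℕ} (hm : 2 ≤ m) (hms : 2 * q.1.1 ≤ m) {w n : E3} (hw : ‖w‖ = 1) (hn : ‖n‖ = 1)
    (hwn : inner ℝ w n = (0:ℝ)) :
    Joined q (el x y (adm_std hv hm le_rfl hw hn hwn)) := by
  obtain ⟨u, hT, h1, h2⟩ := exists_tan q.2.1
  have hint : ∫ t in (0:ℝ)..q.1.1, u t = y - x := by
    have := h2 q.1.1 (right_mem_Icc.2 hT.pos.le)
    rw [q.2.2.1, q.2.2.2] at this
    exact (sub_eq_of_eq_add' this).symm
  obtain ⟨c, R, w', n', C⟩ := cfg_exists hT hs (by rw [hint]; exact hv)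
  have hL : 4 * Real.pi * m ≤ 2 * Real.pi * m * R := by
    have : 0 ≤ 2 * Real.pi * m := by positivity
    nlinarith [C.hR]
  have j1 := el_tan q hT h1 h2 (adm_tan hT _ hint)
  obtain ⟨h, j2⟩ := stage1 C hm hint
  have j3 := stage2 C hm hms hv hint h (adm_std hv hm hL C.hw C.hn C.hwn)
  exact ((j1.trans j2).trans j3).trans (std_joined hv hm hL le_rfl C.hw C.hn C.hwn hw hn hwn)

lemma len_ne_pi {x y : E3} (hv : ‖y - x‖ < 2) (q : SigmaSpace x y) : q.1.1 ≠ Real.pi := by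
  intro he
  obtain ⟨u, hT, h1, h2⟩ := exists_tan q.2.1
  have := h2 q.1.1 (right_mem_Icc.2 hT.pos.le)
  rw [q.2.2.1, q.2.2.2, he] at this
  have h3 := two_le_pi hT
  rw [this] at hv
  simp at hv
  linarith

lemma len_cont (x y : E3) : Continuous (fun q : SigmaSpace x y => q.1.1) :=
  (continuous_fst (X := ℝ) (Y := UniformFun unitInterval E3 × UniformFun unitInterval E3)).comp
    (f := fun q : SigmaSpace x y =>
      ((q.1.1,
        UniformFun.ofFun (fun t : unitInterval => q.1.2 ((t : ℝ) * q.1.1)),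
        UniformFun.ofFun (fun t : unitInterval =>
          derivWithin q.1.2 (Icc 0 q.1.1) ((t : ℝ) * q.1.1))) :
        ℝ × UniformFun unitInterval E3 × UniformFun unitInterval E3)) continuous_induced_dom

lemma short_inj {x y : E3} (q : SigmaSpace x y) (hs : q.1.1 < Real.pi) :
    InjOn q.1.2 (Icc 0 q.1.1) := by
  obtain ⟨u, hT, h1, h2⟩ := exists_tan q.2.1
  have key : ∀ a ∈ Icc 0 q.1.1, ∀ b ∈ Icc 0 q.1.1, a < b → q.1.2 a ≠ q.1.2 b := by
    intro a ha b hb hab he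
    rw [h2 a ha, h2 b hb, add_right_inj] at he
    have h3 := intervalIntegral.integral_add_adjacent_intervals
      (hT.cont.intervalIntegrable (μ := MeasureTheory.volume) 0 a) (hT.cont.intervalIntegrable a b)
    rw [he, add_eq_left] at h3
    have h4 := inner_integral_ge hT a b a le_rfl hab.le (by linarith [ha.1, hb.2])
    rw [h3] at h4
    simp at h4
    have := Real.sin_pos_of_pos_of_lt_pi (sub_pos.2 hab) (by linarith [ha.1, hb.2])
    linarith
  intro a ha b hb he
  rcases lt_trichotomy a b with h | h | h
  · exact absurd he (key a ha b hb h)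
  · exact h
  · exact absurd he.symm (key b hb a ha h)

/-- For `0 < ‖x - y‖ < 2`, the space `Σ(x,y)` of 1-constrained
arcs from `x` to `y` with the `C¹` metric has exactly two connected components,
one of which consists exclusively of embedded arcs. -/
theorem sigmaSpace_two_components (x y : E3)
    (hpos : 0 < ‖x - y‖) (hlt : ‖x - y‖ < 2) :
    Nat.card (ConnectedComponents (SigmaSpace x y)) = 2 ∧
    ∃ C : ConnectedComponents (SigmaSpace x y),
      ∀ q : SigmaSpace x y, ConnectedComponents.mk q = C →
        InjOn q.1.2 (Icc 0 q.1.1) := by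
  have hv : ‖y - x‖ < 2 := by rwa [norm_sub_rev]
  have hne : y - x ≠ 0 := by rwa [← norm_pos_iff, norm_sub_rev]
  have hpi := Real.pi_gt_three
  have hcl : IsClopen {q : SigmaSpace x y | q.1.1 < Real.pi} := by
    constructor
    · have : {q : SigmaSpace x y | q.1.1 < Real.pi} = {q | q.1.1 ≤ Real.pi} := by
        ext q
        exact ⟨fun h => show q.1.1 ≤ Real.pi from le_of_lt (show q.1.1 < Real.pi from h), fun h => lt_of_le_of_ne h (len_ne_pi hv q)⟩
      rw [this]
      exact isClosed_le (len_cont x y) continuous_const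
    · exact isOpen_lt (len_cont x y) continuous_const
  have hiff : ∀ q q' : SigmaSpace x y, ConnectedComponents.mk q = ConnectedComponents.mk q' →
      q'.1.1 < Real.pi → q.1.1 < Real.pi := by
    intro q q' he hq'
    have h1 := hcl.connectedComponent_subset hq'
    rw [ConnectedComponents.coe_eq_coe'] at he
    exact h1 he
  have hjoin : ∀ q q' : SigmaSpace x y, Joined q q' →
      ConnectedComponents.mk q = ConnectedComponents.mk q' := by
    intro q q' hj
    rw [ConnectedComponents.coe_eq_coe']
    exact pathComponent_subset_component _ hj.symm
  obtain ⟨q0, hq0d⟩ : ∃ q0, q0 = el x y (adm_const hne) := ⟨_, rfl⟩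
  have hq0 : q0.1.1 < Real.pi := by
    rw [hq0d]
    show alen _ 1 < _
    simp only [alen, intervalIntegral.integral_const]
    simp
    linarith
  obtain ⟨w, hw, -, -⟩ := exists_orth (0 : E3) 0
  obtain ⟨n, hn, hwn, -⟩ := exists_orth w w
  obtain ⟨q1, hq1d⟩ : ∃ q1, q1 = el x y (adm_std (m := 2) hv le_rfl le_rfl hw hn hwn) := ⟨_, rfl⟩
  have hq1 : Real.pi < q1.1.1 := by
    rw [hq1d]
    exact std_len hv le_rfl le_rfl hw hn hwn
  have hlong : ∀ q : SigmaSpace x y, Real.pi < q.1.1 → Joined q q1 := by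
    intro q hq
    obtain ⟨m, hm⟩ := exists_nat_ge (max 2 (max (2 * q.1.1) (2 * q1.1.1)))
    have m2 : 2 ≤ m := by exact_mod_cast (le_max_left _ _).trans hm
    have m3 := ((le_max_left _ _).trans (le_max_right _ _)).trans hm
    have m4 := ((le_max_right _ _).trans (le_max_right _ _)).trans hm
    exact (long_joined hv q hq m2 m3 hw hn hwn).trans (long_joined hv q1 hq1 m2 m4 hw hn hwn).symm
  constructor
  · rw [Nat.card_eq_two_iff]
    refine ⟨ConnectedComponents.mk q0, ConnectedComponents.mk q1, ?_, ?_⟩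
    · intro he
      exact absurd (hiff _ _ he.symm hq0) (by linarith)
    · rw [eq_univ_iff_forall]
      intro z
      obtain ⟨q, rfl⟩ := ConnectedComponents.surjective_coe z
      rcases lt_or_gt_of_ne (len_ne_pi hv q) with h | h
      · left; rw [hq0d]; exact hjoin _ _ (short_joined hne q h)
      · right; exact hjoin _ _ (hlong q h)
  · exact ⟨ConnectedComponents.mk q0, fun q hq => short_inj q (hiff _ _ hq hq0)⟩

end
end
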